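/- arXiv:2209.12044 — 3 statements merged into one kernel-verified Lean document; each statement's English description precedes it below -/
import Mathlib

section
/- Let W ⊆ C^ω be an objective which has ε-memory ≤ μ for a cardinal μ. Then for every cardinal κ there exists an ε-separated well-monotone C^ε-graph of breadth ≤ μ which is (κ, W^ε)-universal. -/
universe u v

open Cardinal

/-- A `C`-pregraph on vertex type `V`: a set of coloured directed edges. -/
structure Pregraph (C : Type u) (V : Type u) : Type u where
  Edge : V → C → V → Prop

namespace Pregraph

variable {C V V' : Type u}

/-- A pregraph is a graph when it has no sinks. -/
def NoSinks (G : Pregraph C V) : Prop :=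
  ∀ v : V, ∃ c v', G.Edge v c v'

/-- An infinite path with vertex sequence `π` and colour sequence `γ`. -/
def InfPath (G : Pregraph C V) (π : ℕ → V) (γ : ℕ → C) : Prop :=
  ∀ i, G.Edge (π i) (γ i) (π (i + 1))

/-- A finite path starting at a given vertex, recorded as a list of (colour, target) pairs. -/
def ListPath (G : Pregraph C V) : V → List (C × V) → Prop
  | _, [] => True
  | v, e :: p => G.Edge v e.1 e.2 ∧ G.ListPath e.2 p

/-- Endpoint of a finite path. -/
def pathEnd : V → List (C × V) → V
  | v, [] => v
  | _, e :: p => pathEnd e.2 p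

/-- A pretree: every vertex is reached from the root by a unique finite path. -/
def IsPretree (G : Pregraph C V) (t₀ : V) : Prop :=
  ∀ t : V, ∃! p : List (C × V), G.ListPath t₀ p ∧ pathEnd t₀ p = t

/-- A tree: a pretree without sinks. -/
def IsTree (G : Pregraph C V) (t₀ : V) : Prop :=
  G.NoSinks ∧ G.IsPretree t₀

/-- Morphisms of pregraphs. -/
def IsMorphism (G : Pregraph C V) (H : Pregraph C V') (φ : V → V') : Prop :=
  ∀ ⦃v c v'⦄, G.Edge v c v' → H.Edge (φ v) c (φ v')

/-- The value of a vertex with respect to a valuation: the supremum of the values of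
infinite paths from the vertex. -/
noncomputable def valueAt {X : Type v} [CompleteLinearOrder X]
    (G : Pregraph C V) (val : (ℕ → C) → X) (v : V) : X :=
  sSup {x | ∃ π γ, π 0 = v ∧ G.InfPath π γ ∧ val γ = x}

/-- A vertex satisfies an objective `W` if every infinite path from it has colour
sequence in `W`. -/
def VertexSat (G : Pregraph C V) (W : Set (ℕ → C)) (v : V) : Prop :=
  ∀ π γ, π 0 = v → G.InfPath π γ → γ ∈ W

/-- A pregraph satisfies an objective if all its vertices do. -/
def Sat (G : Pregraph C V) (W : Set (ℕ → C)) : Prop :=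
  ∀ v, G.VertexSat W v

/-- Monotonicity of a pregraph with respect to an order relation `le`:
`u ≥ v →c v' ≥ u'` implies `u →c u'`. -/
def MonotoneRel (G : Pregraph C V) (le : V → V → Prop) : Prop :=
  ∀ ⦃u v c v' u'⦄, le v u → G.Edge v c v' → le u' v' → G.Edge u c u'

end Pregraph

/-- The strict relation associated to `le`. -/
def strictOf {V : Type u} (le : V → V → Prop) : V → V → Prop :=
  fun a b => le a b ∧ a ≠ b

/-- `w' : ℕ → C` is a completion of `w : ℕ → Option C` if the projection of `w`
(deleting all `none`'s, i.e. all ε's) is a prefix of (or equal to) `w'`. -/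
def IsCompletion {C : Type u} (w : ℕ → Option C) (w' : ℕ → C) : Prop :=
  ∀ (k n : ℕ) (h : n < ((List.range k).filterMap w).length),
    ((List.range k).filterMap w).get ⟨n, h⟩ = w' n

/-- The ε-extension of a valuation, where `none` plays the role of ε.
If the projection of `w` is infinite, its unique completion `w'` yields `val w'`;
otherwise this is the infimum of `val` over all completions. -/
noncomputable def epsExtension {C : Type u} {X : Type v} [CompleteLinearOrder X]
    (val : (ℕ → C) → X) : (ℕ → Option C) → X :=
  fun w => sInf {x | ∃ w', IsCompletion w w' ∧ val w' = x}

/-- The ε-extension of an objective. -/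
def epsObjective {C : Type u} (W : Set (ℕ → C)) : Set (ℕ → Option C) :=
  {w | ∃ w', IsCompletion w w' ∧ w' ∈ W}

/-- Strategies: `S` is a graph, `πS` a morphism sending `s₀` to `v₀`, and every Adam move
can be simulated from every state above the corresponding vertex. -/
def IsStrategy {C V VS : Type u} (G : Pregraph C V) (VEve : Set V) (v₀ : V)
    (S : Pregraph C VS) (πS : VS → V) (s₀ : VS) : Prop :=
  S.NoSinks ∧ S.IsMorphism G πS ∧ πS s₀ = v₀ ∧
    ∀ v, v ∉ VEve → ∀ c v', G.Edge v c v' →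
      ∀ s, πS s = v → ∃ s', πS s' = v' ∧ S.Edge s c s'

/-- The value of a game: the infimum of the values of its strategies. -/
noncomputable def gameValue {C V : Type u} {X : Type v} [CompleteLinearOrder X]
    (G : Pregraph C V) (VEve : Set V) (v₀ : V) (val : (ℕ → C) → X) : X :=
  sInf {x | ∃ (VS : Type u) (S : Pregraph C VS) (πS : VS → V) (s₀ : VS),
    IsStrategy G VEve v₀ S πS s₀ ∧ S.valueAt val s₀ = x}

/-- An ε-strategy: a product strategy over `M` (vertices form a subset `D ⊆ V × M`,
projection is the first component) whose ε-edges do not update the memory. -/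
def IsEpsStrategy {C V M : Type u} (G : Pregraph (Option C) V) (VEve : Set V) (v₀ : V)
    (D : Set (V × M)) (S : Pregraph (Option C) ↥D) (s₀ : ↥D) : Prop :=
  IsStrategy G VEve v₀ S (fun s => (s : V × M).1) s₀ ∧
    ∀ s s' : ↥D, S.Edge s none s' → (s : V × M).2 = (s' : V × M).2

/-- A product strategy is chromatic if memory updates only depend on the current memory
state and the colour read. -/
def IsChromaticStrat {C V M : Type u} (D : Set (V × M)) (S : Pregraph C ↥D) : Prop :=
  ∃ δ : M → C → M, ∀ (s s' : ↥D) (c : C), S.Edge s c s' → (s' : V × M).2 = δ (s : V × M).2 c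

/-- ε-separated monotone graph over `M` (with `part` the partition into fibres):
`v ≤ v' ↔ v' →ε v` is a partial order making the graph monotone, ε-edges stay inside
fibres, and each fibre is totally ordered. -/
structure IsEpsSeparated {C V M : Type u} (U : Pregraph (Option C) V) (part : V → M) : Prop where
  refl : ∀ v, U.Edge v none v
  antisymm : ∀ ⦃v v'⦄, U.Edge v none v' → U.Edge v' none v → v = v'
  mono : ∀ ⦃u v c v' u'⦄, U.Edge u none v → U.Edge v c v' → U.Edge v' none u' → U.Edge u c u'
  sameFiber : ∀ ⦃v v'⦄, U.Edge v none v' → part v = part v'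
  total : ∀ ⦃v v'⦄, part v = part v' → U.Edge v none v' ∨ U.Edge v' none v

/-- Well-foundedness of the order `v ≤ v' ↔ v' →ε v` of an ε-separated graph. -/
def EpsWellFounded {C V : Type u} (U : Pregraph (Option C) V) : Prop :=
  WellFounded (fun v v' => U.Edge v' none v ∧ v ≠ v')

/-- A chromatic ε-separated graph: colours act uniformly on the parts. -/
def IsChromaticGraph {C V M : Type u} (U : Pregraph (Option C) V) (part : V → M) : Prop :=
  ∃ δ : M → C → M, ∀ ⦃v c v'⦄, U.Edge v (some c) v' → part v' = δ (part v) c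

/-- `(κ, val)`-universality for a valuation: every tree of cardinality `< κ` maps into `U`
by a morphism preserving the value at the root. -/
def IsUniversal {C VU : Type u} {X : Type v} [CompleteLinearOrder X]
    (κ : Cardinal.{u}) (val : (ℕ → C) → X) (U : Pregraph C VU) : Prop :=
  ∀ (VT : Type u) (T : Pregraph C VT) (t₀ : VT), T.IsTree t₀ → #VT < κ →
    ∃ φ : VT → VU, T.IsMorphism U φ ∧ U.valueAt val (φ t₀) ≤ T.valueAt val t₀

/-- A valuation has ε-memory ≤ μ: in every ε-game, the value is attained by an ε-strategy
of memory ≤ μ. -/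
def HasEpsMemLE {C : Type u} {X : Type v} [CompleteLinearOrder X]
    (val : (ℕ → C) → X) (μ : Cardinal.{u}) : Prop :=
  ∀ (V : Type u) (G : Pregraph (Option C) V), G.NoSinks → ∀ (VEve : Set V) (v₀ : V),
    ∃ (M : Type u) (D : Set (V × M)) (S : Pregraph (Option C) ↥D) (s₀ : ↥D),
      #M ≤ μ ∧ IsEpsStrategy G VEve v₀ D S s₀ ∧
      S.valueAt (epsExtension val) s₀ ≤ gameValue G VEve v₀ (epsExtension val)

/-- The valuation (into `Prop`, ordered with `False = ⊥ < ⊤ = True`) associated with an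
objective `W`: value `⊥` exactly on the words of `W`. -/
def objValuation {C : Type u} (W : Set (ℕ → C)) : (ℕ → C) → Prop :=
  fun w => w ∉ W

/-!
Put all trees of cardinality `< κ` whose root satisfies `Wᵋ` side by side under a new root, and let
Adam walk in the resulting graph. At any point he may also show Eve a set `A` of vertices
containing the current one, after which she chooses the vertex of `A` from which the play resumes.
Eve wins by always resuming from the current vertex, so she wins with an ε-strategy over some `M`
with `#M ≤ μ`. Since ε-edges keep the memory, such a strategy answers `A` in a way that depends only
on `A` and on the memory `m`: her answer is reachable by ε-edges from every state of memory `m`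
over `A`. Hence in the ε-closure of the strategy every nonempty set of states with memory `m` has a
least element, and quotienting by ε-equivalence gives an ε-separated well-monotone graph. It still
satisfies `Wᵋ` at the root, and every satisfying tree maps into it because Adam's moves can all be
followed. A top vertex takes care of the remaining trees.
-/

theorem mem_epsObjective_of_prefix {C : Type u} {W : Set (ℕ → C)} {w₁ w₂ : ℕ → Option C}
    (h : ∀ k, ∃ k', (List.range k).filterMap w₁ <+: (List.range k').filterMap w₂)
    (h₂ : w₂ ∈ epsObjective W) : w₁ ∈ epsObjective W := by
  obtain ⟨w', hw', hW⟩ := h₂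
  refine ⟨w', fun k n hn ↦ ?_, hW⟩
  obtain ⟨k', hk'⟩ := h k
  rw [← hw' k' n (hn.trans_le hk'.length_le)]
  exact hk'.getElem hn

theorem exists_seq_forall_map_range {α : Type u} {P : List α → Prop} (nil : P [])
    (append : ∀ p, P p → ∃ a, P (p ++ [a])) :
    ∃ x : ℕ → α, ∀ k, P ((List.range k).map x) := by
  choose next hnext using fun p : Subtype P ↦ append p.1 p.2
  let prefixes (k : ℕ) : Subtype P :=
    Nat.rec ⟨[], nil⟩ (fun _ p ↦ ⟨p.1 ++ [next p], hnext p⟩) k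
  have map_range (k : ℕ) : (List.range k).map (fun i ↦ next (prefixes i)) = (prefixes k).1 := by
    induction k with
    | zero => rfl
    | succ k ih => rw [List.range_succ, List.map_append, ih]; rfl
  exact ⟨fun i ↦ next (prefixes i), fun k ↦ map_range k ▸ (prefixes k).2⟩

namespace Pregraph

variable {C V V' : Type u}

theorem listPath_append {G : Pregraph C V} {v : V} {p q : List (C × V)} :
    G.ListPath v (p ++ q) ↔ G.ListPath v p ∧ G.ListPath (pathEnd v p) q := by
  induction p generalizing v with
  | nil => simp [ListPath, pathEnd]
  | cons e p ih => simp [ListPath, pathEnd, ih, and_assoc]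

theorem ListPath.of_prefix {G : Pregraph C V} {v : V} {p q : List (C × V)}
    (hq : G.ListPath v q) (hpq : p <+: q) : G.ListPath v p := by
  obtain ⟨q', rfl⟩ := hpq
  exact (listPath_append.1 hq).1

theorem pathEnd_append (v : V) (p q : List (C × V)) :
    pathEnd v (p ++ q) = pathEnd (pathEnd v p) q := by
  induction p generalizing v with
  | nil => rfl
  | cons e _ ih => exact ih e.2

theorem infPath_of_forall_listPath {G : Pregraph C V} {v : V} {x : ℕ → C × V}
    (hx : ∀ k, G.ListPath v ((List.range k).map x)) :
    G.InfPath (fun i ↦ pathEnd v ((List.range i).map x)) (fun i ↦ (x i).1) := by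
  intro i
  have hi := hx (i + 1)
  rw [List.range_succ, List.map_append, listPath_append] at hi
  simp only [List.range_succ, List.map_append, pathEnd_append]
  exact hi.2.1

theorem NoSinks.exists_seq_of_prefix_chain {G : Pregraph C V} (hG : G.NoSinks) {v : V}
    {P : ℕ → List (C × V)} (hP : ∀ n, P n <+: P (n + 1)) (hpath : ∀ n, G.ListPath v (P n)) :
    ∃ x : ℕ → C × V, (∀ k, G.ListPath v ((List.range k).map x)) ∧
      ∀ n, ∃ k, P n <+: (List.range k).map x := by
  have chain : ∀ ⦃m n⦄, m ≤ n → P m <+: P n := Nat.rel_of_forall_rel_succ_of_le (· <+: ·) hP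
  let Compatible (p : List (C × V)) : Prop := G.ListPath v p ∧ ∀ n, p <+: P n ∨ P n <+: p
  have extend (p : List (C × V)) (hp : Compatible p) : ∃ e, Compatible (p ++ [e]) := by
    by_cases hlong : ∃ n, p.length < (P n).length
    · obtain ⟨n, hn⟩ := hlong
      obtain ⟨q, hq⟩ := (hp.2 n).resolve_right fun h ↦ hn.not_ge h.length_le
      obtain ⟨e, q, rfl⟩ : ∃ e q', q = e :: q' :=
        List.exists_cons_of_ne_nil fun h ↦ by simp [← hq, h] at hn
      have hpre : p ++ [e] <+: P n := ⟨q, by simp [← hq]⟩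
      refine ⟨e, (hpath n).of_prefix hpre, fun m ↦ ?_⟩
      rcases le_total n m with hnm | hmn
      · exact .inl (hpre.trans (chain hnm))
      · exact List.prefix_or_prefix_of_prefix hpre (chain hmn)
    · push Not at hlong
      obtain ⟨c, v', he⟩ := hG (pathEnd v p)
      refine ⟨(c, v'), listPath_append.2 ⟨hp.1, he, trivial⟩, fun n ↦ .inr ?_⟩
      have hPn : P n <+: p := (hp.2 n).elim
        (fun h ↦ (h.eq_of_length_le (hlong n)) ▸ List.prefix_rfl) id
      exact hPn.trans (List.prefix_append _ _)
  obtain ⟨x, hx⟩ := exists_seq_forall_map_range (P := Compatible)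
    ⟨trivial, fun n ↦ .inl List.nil_prefix⟩ extend
  refine ⟨x, fun k ↦ (hx k).1, fun n ↦ ⟨(P n).length, ?_⟩⟩
  rcases (hx (P n).length).2 n with h | h
  · rw [h.eq_of_length (by simp)]
  · exact h

/-! ### Simulations -/

/-- `R` is a simulation of `G` by `H`: every move out of a vertex of `G` can be copied from any
`R`-related vertex of `H`. -/
def IsSimulation (G : Pregraph C V) (H : Pregraph C V') (R : V → V' → Prop) : Prop :=
  ∀ ⦃v w⦄, R v w → ∀ ⦃c v'⦄, G.Edge v c v' → ∃ w', R v' w' ∧ H.Edge w c w'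

theorem VertexSat.of_simulation {G : Pregraph C V} {H : Pregraph C V'} {R : V → V' → Prop}
    {W : Set (ℕ → C)} {v : V} {w : V'} (hw : H.VertexSat W w) (hR : G.IsSimulation H R)
    (hvw : R v w) : G.VertexSat W v := by
  rintro π γ rfl hπ
  choose next hnext using fun n (x : {x // R (π n) x}) ↦ hR x.2 (hπ n)
  let ρ (n : ℕ) : {x // R (π n) x} := Nat.rec ⟨w, hvw⟩ (fun n x ↦ ⟨next n x, (hnext n x).1⟩) n
  exact hw (fun n ↦ (ρ n).1) γ rfl fun n ↦ (hnext n (ρ n)).2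

theorem VertexSat.of_isMorphism {G : Pregraph C V} {H : Pregraph C V'} {φ : V → V'}
    {W : Set (ℕ → C)} {v : V} (hv : H.VertexSat W (φ v)) (hφ : G.IsMorphism H φ) :
    G.VertexSat W v :=
  hv.of_simulation (R := fun v w ↦ φ v = w)
    (by rintro v _ rfl c v' he; exact ⟨_, rfl, hφ he⟩) rfl

theorem IsPretree.exists_isMorphism {T : Pregraph C V} {t₀ : V} (hT : T.IsPretree t₀)
    {S : Pregraph C V'} {R : V → V' → Prop} (hR : T.IsSimulation S R) {s₀ : V'} (hs₀ : R t₀ s₀) :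
    ∃ φ : V → V', T.IsMorphism S φ ∧ φ t₀ = s₀ := by
  have : Nonempty V' := ⟨s₀⟩
  let next (s : V') (e : C × V) : V' := Classical.epsilon fun s' ↦ R e.2 s' ∧ S.Edge s e.1 s'
  have next_spec {t s c t'} (hts : R t s) (he : T.Edge t c t') :
      R t' (next s (c, t')) ∧ S.Edge s c (next s (c, t')) :=
    Classical.epsilon_spec (hR hts he)
  have foldl_rel (p : List (C × V)) :
      ∀ {t s}, R t s → T.ListPath t p → R (pathEnd t p) (p.foldl next s) := by
    induction p with
    | nil => exact fun hts _ ↦ hts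
    | cons e p ih => exact fun hts hp ↦ ih (next_spec hts hp.1).1 hp.2
  choose p hp hp_unique using hT
  refine ⟨fun t ↦ (p t).foldl next s₀, fun t c t' he ↦ ?_, ?_⟩
  · have hpt' : p t ++ [(c, t')] = p t' := hp_unique t' _
      ⟨listPath_append.2 ⟨(hp t).1, (hp t).2.symm ▸ he, trivial⟩, pathEnd_append _ _ _⟩
    have hrel : R t ((p t).foldl next s₀) := by
      simpa only [(hp t).2] using foldl_rel (p t) hs₀ (hp t).1
    simpa only [← hpt', List.foldl_append, List.foldl_cons, List.foldl_nil] using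
      (next_spec hrel he).2
  · simp only [← hp_unique t₀ [] ⟨trivial, rfl⟩, List.foldl_nil]

/-- The pregraph obtained by pulling the edges of `G` back along `f`. -/
def comap (f : V' → V) (G : Pregraph C V) : Pregraph C V' where
  Edge v c v' := G.Edge (f v) c (f v')

theorem isMorphism_comap (f : V' → V) (G : Pregraph C V) : (G.comap f).IsMorphism G f :=
  fun _ _ _ he ↦ he

theorem NoSinks.comap {G : Pregraph C V} (hG : G.NoSinks) {f : V' → V}
    (hf : Function.Surjective f) : (G.comap f).NoSinks := by
  intro v
  obtain ⟨c, w, he⟩ := hG (f v)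
  obtain ⟨v', rfl⟩ := hf w
  exact ⟨c, v', he⟩

/-! ### The ε-closure -/

/-- The ε-closure of `G`: an edge coloured `c` is a finite path of `G` whose colours, once the ε's
are deleted, are just `c` (nothing at all if `c` is ε). -/
def epsClosure (G : Pregraph (Option C) V) : Pregraph (Option C) V where
  Edge v c v' := ∃ p : List (Option C × V),
    G.ListPath v p ∧ pathEnd v p = v' ∧ p.filterMap Prod.fst = c.toList

theorem epsClosure_refl (G : Pregraph (Option C) V) (v : V) : G.epsClosure.Edge v none v :=
  ⟨[], trivial, rfl, rfl⟩

theorem Edge.epsClosure {G : Pregraph (Option C) V} {v v' : V} {c : Option C}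
    (he : G.Edge v c v') : G.epsClosure.Edge v c v' :=
  ⟨[(c, v')], ⟨he, trivial⟩, rfl, by cases c <;> rfl⟩

theorem epsClosure_mono {G : Pregraph (Option C) V} {u v v' u' : V} {c : Option C}
    (huv : G.epsClosure.Edge u none v) (he : G.epsClosure.Edge v c v')
    (hvu' : G.epsClosure.Edge v' none u') : G.epsClosure.Edge u c u' := by
  obtain ⟨p, hp, rfl, hpc⟩ := huv
  obtain ⟨q, hq, rfl, hqc⟩ := he
  obtain ⟨r, hr, rfl, hrc⟩ := hvu'
  refine ⟨p ++ (q ++ r), ?_, ?_, ?_⟩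
  · exact listPath_append.2 ⟨hp, listPath_append.2 ⟨hq, hr⟩⟩
  · rw [pathEnd_append, pathEnd_append]
  · simp only [List.filterMap_append, hpc, hqc, hrc, Option.toList_none, List.nil_append,
      List.append_nil]

theorem eq_of_epsClosure_edge_none {G : Pregraph (Option C) V} {M : Type u} {f : V → M}
    (hf : ∀ v v', G.Edge v none v' → f v = f v') {v v' : V} (he : G.epsClosure.Edge v none v') :
    f v = f v' := by
  obtain ⟨p, hp, rfl, hpc⟩ := he
  induction p generalizing v with
  | nil => rfl
  | cons e p ih =>
    obtain ⟨_ | c, w⟩ := e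
    · exact (hf v w hp.1).trans (ih hp.2 hpc)
    · cases hpc

theorem VertexSat.epsClosure {G : Pregraph (Option C) V} {W : Set (ℕ → C)} {v : V}
    (hv : G.VertexSat (epsObjective W) v) (hG : G.NoSinks) :
    G.epsClosure.VertexSat (epsObjective W) v := by
  rintro π γ rfl hπ
  choose segment hpath hend hcolours using hπ
  let P (n : ℕ) : List (Option C × V) := (List.range n).flatMap segment
  have P_succ (n : ℕ) : P (n + 1) = P n ++ segment n := by
    simp only [P, List.range_succ, List.flatMap_append, List.flatMap_singleton]
  have P_end (n : ℕ) : pathEnd (π 0) (P n) = π n := by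
    induction n with
    | zero => rfl
    | succ n ih => rw [P_succ, pathEnd_append, ih, hend]
  have P_path (n : ℕ) : G.ListPath (π 0) (P n) := by
    induction n with
    | zero => trivial
    | succ n ih => exact P_succ n ▸ listPath_append.2 ⟨ih, (P_end n).symm ▸ hpath n⟩
  have P_colours (n : ℕ) : (P n).filterMap Prod.fst = (List.range n).filterMap γ := by
    induction n with
    | zero => rfl
    | succ n ih =>
      rw [P_succ, List.filterMap_append, ih, hcolours, List.range_succ, List.filterMap_append]
      cases h : γ n <;> simp [h]
  obtain ⟨x, hx, hPx⟩ := hG.exists_seq_of_prefix_chain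
    (fun n ↦ P_succ n ▸ List.prefix_append _ _) P_path
  refine mem_epsObjective_of_prefix (fun k ↦ ?_)
    (hv (fun i ↦ pathEnd (π 0) ((List.range i).map x)) _ rfl (infPath_of_forall_listPath hx))
  obtain ⟨k', hk'⟩ := hPx k
  refine ⟨k', ?_⟩
  simpa only [P_colours, List.filterMap_map, Function.comp_def] using hk'.filterMap Prod.fst

theorem vertexSat_of_forall_edge_eps {G : Pregraph (Option C) V} {W : Set (ℕ → C)} {v : V}
    (hG : G.NoSinks)
    (h : ∀ c v', G.Edge v c v' → c = none ∧ G.VertexSat (epsObjective W) v') :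
    G.VertexSat (epsObjective W) v := by
  rintro π γ rfl hπ
  obtain ⟨hγ, hsat⟩ := h _ _ (hπ 0)
  -- Stuttering at `π 1` reads the same colours as `π`, which keeps `γ` intact.
  refine hsat.epsClosure hG (fun i ↦ π (max i 1)) γ rfl fun i ↦ ?_
  cases i with
  | zero => exact hγ ▸ G.epsClosure_refl (π 1)
  | succ i => simpa using (hπ (i + 1)).epsClosure

/-! ### Rooted sums -/

/-- The edges of the sum of a family of rooted graphs, with a new root (`none`) that has an ε-edge
to the root of every summand. The new root carries a loop when the family is empty, so as not to be
a sink. -/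
inductive RootedSumEdge {ι : Type u} {K : ι → Type u} (G : ∀ i, Pregraph (Option C) (K i))
    (r : ∀ i, K i) : Option (Σ i, K i) → Option C → Option (Σ i, K i) → Prop
  | loop : IsEmpty ι → RootedSumEdge G r none none none
  | enter (i : ι) : RootedSumEdge G r none none (some ⟨i, r i⟩)
  | move {i : ι} {v v' : K i} {c : Option C} :
      (G i).Edge v c v' → RootedSumEdge G r (some ⟨i, v⟩) c (some ⟨i, v'⟩)

/-- The pregraph with edges `RootedSumEdge`. -/
def rootedSum {ι : Type u} {K : ι → Type u} (G : ∀ i, Pregraph (Option C) (K i)) (r : ∀ i, K i) :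
    Pregraph (Option C) (Option (Σ i, K i)) :=
  ⟨RootedSumEdge G r⟩

section RootedSum

variable {ι : Type u} {K : ι → Type u} {G : ∀ i, Pregraph (Option C) (K i)} {r : ∀ i, K i}

theorem rootedSum_noSinks (hG : ∀ i, (G i).NoSinks) : (rootedSum G r).NoSinks := by
  rintro (_ | ⟨i, v⟩)
  · rcases isEmpty_or_nonempty ι with hι | ⟨⟨i⟩⟩
    · exact ⟨_, _, .loop hι⟩
    · exact ⟨_, _, .enter i⟩
  · obtain ⟨c, v', he⟩ := hG i v
    exact ⟨_, _, .move he⟩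

theorem rootedSum_vertexSat_root [Nonempty ι] {W : Set (ℕ → C)} (hG : ∀ i, (G i).NoSinks)
    (hr : ∀ i, (G i).VertexSat (epsObjective W) (r i)) :
    (rootedSum G r).VertexSat (epsObjective W) none := by
  refine vertexSat_of_forall_edge_eps (rootedSum_noSinks hG) fun c x he ↦ ?_
  cases he with
  | loop hι => exact (not_isEmpty_of_nonempty ι hι).elim
  | enter i =>
    refine ⟨rfl, (hr i).of_simulation (R := fun x v ↦ x = some ⟨i, v⟩) ?_ rfl⟩
    rintro _ v rfl c _ (_ | _ | he)
    exact ⟨_, rfl, he⟩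

end RootedSum

/-- The graphs on the vertex type `K` with a root satisfying `W`. Fixing `K` keeps them in the
universe of `K`, so that they can be the index type of a rooted sum. -/
abbrev SatRootedGraph (W : Set (ℕ → C)) (K : Type u) : Type u :=
  {p : Pregraph C K × K // p.1.NoSinks ∧ p.1.VertexSat W p.2}

theorem exists_satRootedGraph_isMorphism {T : Pregraph C V} {t₀ : V} {W : Set (ℕ → C)}
    (hT : T.NoSinks) (ht₀ : T.VertexSat W t₀) {K : Type u} (hK : #V ≤ #K) :
    ∃ (i : SatRootedGraph W K) (φ : V → K), T.IsMorphism i.1.1 φ ∧ φ t₀ = i.1.2 := by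
  obtain ⟨j⟩ := hK
  have : Nonempty V := ⟨t₀⟩
  have hj : Function.LeftInverse (Function.invFun j) j := Function.leftInverse_invFun j.injective
  have hsat : (T.comap (Function.invFun j)).VertexSat W (j t₀) :=
    VertexSat.of_isMorphism (by rwa [hj t₀]) (isMorphism_comap _ T)
  refine ⟨⟨(T.comap (Function.invFun j), j t₀), hT.comap hj.surjective, hsat⟩, j,
    fun t c t' he ↦ ?_, rfl⟩
  change T.Edge (Function.invFun j (j t)) c (Function.invFun j (j t'))
  rwa [hj t, hj t']

/-! ### Adding a top vertex -/

/-- `U` with a new vertex `none` added to the fibre `m`, having every edge allowed by the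
separation of the fibres, and which no old vertex can reach. -/
def addTop {M : Type u} (U : Pregraph (Option C) V) (part : V → M) (m : M) :
    Pregraph (Option C) (Option V) where
  Edge
    | none, c, x => c = none → m = x.elim m part
    | some _, _, none => False
    | some v, c, some v' => U.Edge v c v'

theorem VertexSat.addTop {U : Pregraph (Option C) V} {M : Type u} {part : V → M} {m : M}
    {W : Set (ℕ → Option C)} {v : V} (hv : U.VertexSat W v) :
    (U.addTop part m).VertexSat W (some v) := by
  refine hv.of_simulation (R := fun x v ↦ x = some v) ?_ rfl
  rintro _ v rfl c (_ | v') he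
  · exact he.elim
  · exact ⟨v', rfl, he⟩

theorem VertexSat.of_edge_none {U : Pregraph (Option C) V} (hrefl : ∀ v, U.Edge v none v)
    (hmono : ∀ ⦃u v c v' u'⦄, U.Edge u none v → U.Edge v c v' → U.Edge v' none u' → U.Edge u c u')
    {W : Set (ℕ → Option C)} {v v' : V} (hv : U.VertexSat W v) (he : U.Edge v none v') :
    U.VertexSat W v' :=
  hv.of_simulation (R := fun x y ↦ U.Edge y none x)
    (fun _ _ hyx _ x' hxx' ↦ ⟨x', hrefl x', hmono hyx hxx' (hrefl x')⟩) he

end Pregraph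

open Pregraph

theorem IsEpsSeparated.addTop {C V M : Type u} {U : Pregraph (Option C) V} {part : V → M}
    (hU : IsEpsSeparated U part) (m : M) :
    IsEpsSeparated (U.addTop part m) (fun x ↦ x.elim m part) := by
  have sameFiber : ∀ ⦃x x'⦄, (U.addTop part m).Edge x none x' →
      x.elim m part = x'.elim m part := by
    rintro (_ | v) (_ | v') he
    exacts [rfl, he rfl, he.elim, hU.sameFiber he]
  refine ⟨?_, ?_, ?_, sameFiber, ?_⟩
  · rintro (_ | v)
    exacts [fun _ ↦ rfl, hU.refl v]
  · rintro (_ | v) (_ | v') h h'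
    exacts [rfl, h'.elim, h.elim, congrArg some (hU.antisymm h h')]
  · rintro (_ | u) v c v' u' h he h'
    · rintro rfl
      exact (sameFiber h).trans ((sameFiber he).trans (sameFiber h'))
    · match v, v', u', h, he, h' with
      | some _, some _, some _, h, he, h' => exact hU.mono h he h'
  · rintro (_ | v) (_ | v') h
    exacts [.inl fun _ ↦ rfl, .inl fun _ ↦ h, .inr fun _ ↦ h.symm, hU.total h]

theorem EpsWellFounded.addTop {C V M : Type u} {U : Pregraph (Option C) V}
    (hU : EpsWellFounded U) (part : V → M) (m : M) : EpsWellFounded (U.addTop part m) := by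
  have acc_some (v : V) :
      Acc (fun x x' ↦ (U.addTop part m).Edge x' none x ∧ x ≠ x') (some v) := by
    induction v using hU.induction with
    | _ v ih =>
      refine ⟨_, ?_⟩
      rintro (_ | v') ⟨he, hne⟩
      · exact he.elim
      · exact ih v' ⟨he, fun h ↦ hne (congrArg some h)⟩
  refine ⟨?_⟩
  rintro (_ | v)
  · refine ⟨_, ?_⟩
    rintro (_ | v) ⟨-, hne⟩
    exacts [absurd rfl hne, acc_some v]
  · exact acc_some v

/-! ### Making the ε-order antisymmetric -/

/-- An ε-separated well-monotone graph up to antisymmetry: the ε-edges form a preorder (with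
`v ≤ v'` meaning `v' →ε v`) that makes `U` monotone and respects the fibres of `part`, and every
nonempty subset of a fibre has a least element. -/
structure IsEpsWellPreordered {C V M : Type u} (U : Pregraph (Option C) V) (part : V → M) :
    Prop where
  refl : ∀ v, U.Edge v none v
  mono : ∀ ⦃u v c v' u'⦄, U.Edge u none v → U.Edge v c v' → U.Edge v' none u' → U.Edge u c u'
  sameFiber : ∀ ⦃v v'⦄, U.Edge v none v' → part v = part v'
  exists_least : ∀ ⦃Z : Set V⦄, Z.Nonempty → (∀ z ∈ Z, ∀ z' ∈ Z, part z = part z') →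
    ∃ y ∈ Z, ∀ z ∈ Z, U.Edge z none y

namespace IsEpsWellPreordered

variable {C V V' M : Type u} {U : Pregraph (Option C) V} {part : V → M}

theorem comap (hU : IsEpsWellPreordered U part) (f : V' → V) :
    IsEpsWellPreordered (U.comap f) (part ∘ f) where
  refl _ := hU.refl _
  mono _ _ _ _ _ h he h' := hU.mono h he h'
  sameFiber _ _ he := hU.sameFiber he
  exists_least Z hZ hfiber := by
    obtain ⟨_, ⟨y, hy, rfl⟩, hmin⟩ := hU.exists_least (hZ.image f) (by simpa using hfiber)
    exact ⟨y, hy, fun z hz ↦ hmin (f z) (Set.mem_image_of_mem f hz)⟩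

theorem isEpsSeparated (hU : IsEpsWellPreordered U part)
    (antisymm : ∀ ⦃v v'⦄, U.Edge v none v' → U.Edge v' none v → v = v') :
    IsEpsSeparated U part where
  refl := hU.refl
  antisymm := antisymm
  mono := hU.mono
  sameFiber := hU.sameFiber
  total v v' h := by
    obtain ⟨y, rfl | rfl, hy⟩ := hU.exists_least (Set.insert_nonempty v {v'}) (by simp [h])
    · exact .inr (hy v' (by simp))
    · exact .inl (hy v (by simp))

theorem epsWellFounded (hU : IsEpsWellPreordered U part)
    (antisymm : ∀ ⦃v v'⦄, U.Edge v none v' → U.Edge v' none v → v = v') : EpsWellFounded U := by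
  refine WellFounded.wellFounded_iff_has_min.2 fun Z ⟨z₀, hz₀⟩ ↦ ?_
  obtain ⟨y, ⟨hyZ, hyz₀⟩, hy⟩ := hU.exists_least (Z := {z ∈ Z | part z = part z₀})
    ⟨z₀, hz₀, rfl⟩ fun z hz z' hz' ↦ hz.2.trans hz'.2.symm
  refine ⟨y, hyZ, fun z hz ⟨he, hne⟩ ↦ hne (antisymm (hy z ⟨hz, ?_⟩) he)⟩
  exact (hU.sameFiber he).symm.trans hyz₀

theorem exists_isEpsSeparated_quotient (hU : IsEpsWellPreordered U part) :
    ∃ (VQ : Type u) (Q : Pregraph (Option C) VQ) (partQ : VQ → M) (proj : V → VQ),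
      IsEpsSeparated Q partQ ∧ EpsWellFounded Q ∧ U.IsMorphism Q proj ∧
        ∀ (W : Set (ℕ → Option C)) (v : V), U.VertexSat W v → Q.VertexSat W (proj v) := by
  let equiv : Setoid V :=
    { r := AntisymmRel (U.Edge · none ·)
      iseqv :=
        { refl v := ⟨hU.refl v, hU.refl v⟩
          symm h := h.symm
          trans h h' := ⟨hU.mono h.1 h'.1 (hU.refl _), hU.mono h'.2 h.2 (hU.refl _)⟩ } }
  let rep : Quotient equiv → V := Quotient.out
  have rep_mk (v : V) : AntisymmRel (U.Edge · none ·) (rep ⟦v⟧) v := Quotient.mk_out v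
  have antisymm : ∀ ⦃q q'⦄, (U.comap rep).Edge q none q' → (U.comap rep).Edge q' none q →
      q = q' := fun q q' h h' ↦ Quotient.out_equiv_out.1 ⟨h, h'⟩
  refine ⟨_, U.comap rep, part ∘ rep, Quotient.mk equiv, (hU.comap rep).isEpsSeparated antisymm,
    (hU.comap rep).epsWellFounded antisymm, fun v c v' he ↦ ?_, fun W v hv ↦ ?_⟩
  · exact hU.mono (rep_mk v).1 he (rep_mk v').2
  · exact (hv.of_edge_none hU.refl hU.mono (rep_mk v).2).of_isMorphism (isMorphism_comap rep U)

end IsEpsWellPreordered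

/-! ### The choice game -/

/-- The vertices of the choice game on a graph `G`: the vertices of `G`, controlled by Adam, and
the nonempty sets of vertices of `G`, controlled by Eve. -/
inductive ChoiceVertex (V : Type u) : Type u
  | position (v : V)
  | choice (A : Set V) (hA : A.Nonempty)

/-- The vertices of `G` that Eve may consider to be the current one. -/
def ChoiceVertex.options {V : Type u} : ChoiceVertex V → Set V
  | position v => {v}
  | choice A _ => A

/-- The moves of the choice game on `G`. Adam follows the edges of `G`, but may at any point
challenge Eve with a set `A` containing the current vertex `v`; Eve must then resume the play from
some vertex of `A`. -/
inductive ChoiceEdge {C V : Type u} (G : Pregraph (Option C) V) :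
    ChoiceVertex V → Option C → ChoiceVertex V → Prop
  | move {v v' : V} {c : Option C} (he : G.Edge v c v') :
      ChoiceEdge G (.position v) c (.position v')
  | challenge {v : V} {A : Set V} (hA : A.Nonempty) (hv : v ∈ A) :
      ChoiceEdge G (.position v) none (.choice A hA)
  | answer {v : V} {A : Set V} (hA : A.Nonempty) (hv : v ∈ A) :
      ChoiceEdge G (.choice A hA) none (.position v)

namespace Pregraph

variable {C V : Type u}

/-- The arena of the choice game on `G`. -/
def choiceGame (G : Pregraph (Option C) V) : Pregraph (Option C) (ChoiceVertex V) :=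
  ⟨ChoiceEdge G⟩

/-- Eve's vertices in the choice game. -/
def choiceEve (V : Type u) : Set (ChoiceVertex V) :=
  (Set.range .position)ᶜ

theorem choiceGame_noSinks {G : Pregraph (Option C) V} (hG : G.NoSinks) :
    G.choiceGame.NoSinks := by
  rintro (v | ⟨A, v, hv⟩)
  · obtain ⟨c, v', he⟩ := hG v
    exact ⟨_, _, .move he⟩
  · exact ⟨_, _, .answer _ hv⟩

/-- Eve's reference strategy in the choice game: she remembers a vertex of `G`, which she moves
along `G.epsClosure` in parallel with the play; in particular she may answer each challenge by the
vertex where it was issued. -/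
def shadowStrategy (G : Pregraph (Option C) V) :
    Pregraph (Option C) {p : ChoiceVertex V × V // p.2 ∈ p.1.options} where
  Edge p c q := G.choiceGame.Edge p.1.1 c q.1.1 ∧ G.epsClosure.Edge p.1.2 c q.1.2

theorem shadowStrategy_isStrategy {G : Pregraph (Option C) V} (hG : G.NoSinks) (r : V) :
    IsStrategy G.choiceGame (choiceEve V) (.position r) G.shadowStrategy (fun p ↦ p.1.1)
      ⟨(.position r, r), rfl⟩ := by
  refine ⟨?_, fun _ _ _ he ↦ he.1, rfl, ?_⟩
  · rintro ⟨⟨v | ⟨A, hA⟩, w⟩, hw⟩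
    · obtain rfl : w = v := hw
      obtain ⟨c, v', he⟩ := hG w
      exact ⟨c, ⟨(.position v', v'), rfl⟩, .move he, he.epsClosure⟩
    · exact ⟨none, ⟨(.position w, w), rfl⟩, .answer hA hw, G.epsClosure_refl w⟩
  · rintro _ hAdam c x he ⟨⟨_, w⟩, hw⟩ rfl
    cases he with
    | @move v v' _ he =>
      obtain rfl : w = v := hw
      exact ⟨⟨(.position v', v'), rfl⟩, rfl, .move he, he.epsClosure⟩
    | @challenge v A hA hv =>
      obtain rfl : w = v := hw
      exact ⟨⟨(.choice A hA, w), hv⟩, rfl, .challenge hA hv, G.epsClosure_refl w⟩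
    | answer => exact absurd (by simp [choiceEve]) hAdam

theorem shadowStrategy_vertexSat {G : Pregraph (Option C) V} (hG : G.NoSinks)
    {W : Set (ℕ → C)} {r : V} (hr : G.VertexSat (epsObjective W) r) :
    G.shadowStrategy.VertexSat (epsObjective W) ⟨(.position r, r), rfl⟩ :=
  VertexSat.of_isMorphism (φ := fun p ↦ p.1.2) (hr.epsClosure hG) fun _ _ _ he ↦ he.2

end Pregraph

theorem IsStrategy.isSimulation_choiceGame {C V VS : Type u} {G : Pregraph (Option C) V}
    {v₀ : ChoiceVertex V} {S : Pregraph (Option C) VS} {π : VS → ChoiceVertex V} {s₀ : VS}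
    (hS : IsStrategy G.choiceGame (choiceEve V) v₀ S π s₀) :
    G.IsSimulation S (fun v s ↦ π s = .position v) :=
  fun v s hs _ _ he ↦ hS.2.2.2 (.position v) (by simp [choiceEve]) _ _ (.move he) s hs

namespace IsEpsStrategy

variable {C V M : Type u} {G : Pregraph (Option C) V} {v₀ : ChoiceVertex V}
  {D : Set (ChoiceVertex V × M)} {S : Pregraph (Option C) D} {s₀ : D}

theorem exists_challenge (hS : IsEpsStrategy G.choiceGame (choiceEve V) v₀ D S s₀) {s : D} {v : V}
    (hs : s.1.1 = .position v) {A : Set V} (hA : A.Nonempty) (hv : v ∈ A) :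
    ∃ h : (.choice A hA, s.1.2) ∈ D, S.Edge s none ⟨_, h⟩ := by
  obtain ⟨⟨⟨x, m⟩, hD⟩, hx, he⟩ :=
    hS.1.2.2.2 (.position v) (by simp [choiceEve]) _ _ (.challenge hA hv) s hs
  obtain rfl : x = .choice A hA := hx
  obtain rfl : s.1.2 = m := hS.2 _ _ he
  exact ⟨hD, he⟩

theorem exists_answer (hS : IsEpsStrategy G.choiceGame (choiceEve V) v₀ D S s₀) {A : Set V}
    {hA : A.Nonempty} {m : M} (h : (.choice A hA, m) ∈ D) :
    ∃ v ∈ A, ∃ h' : (.position v, m) ∈ D, S.Edge ⟨_, h⟩ none ⟨_, h'⟩ := by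
  obtain ⟨c, ⟨⟨x, m'⟩, hD⟩, he⟩ := hS.1.1 ⟨_, h⟩
  cases hS.1.2.1 he with
  | @answer v _ _ hv =>
    obtain rfl : m = m' := hS.2 _ _ he
    exact ⟨v, hv, hD, he⟩

-- Adam challenges Eve with the set of vertices below `Z`: all the states of `Z` then lead to the
-- same state, because ε-edges keep the memory, and Eve's answer is the least element.
theorem exists_least (hS : IsEpsStrategy G.choiceGame (choiceEve V) v₀ D S s₀) {Z : Set D}
    (hZ : Z.Nonempty) (hpos : ∀ z ∈ Z, ∃ v, z.1.1 = .position v)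
    (hmem : ∀ z ∈ Z, ∀ z' ∈ Z, z.1.2 = z'.1.2) :
    ∃ y ∈ Z, ∀ z ∈ Z, S.epsClosure.Edge z none y := by
  obtain ⟨z₀, hz₀⟩ := hZ
  let A : Set V := {v | ∃ z ∈ Z, z.1.1 = .position v}
  have hA : A.Nonempty := (hpos z₀ hz₀).imp fun v hv ↦ ⟨z₀, hz₀, hv⟩
  have challenge (z) (hz : z ∈ Z) : ∃ h : (.choice A hA, z₀.1.2) ∈ D, S.Edge z none ⟨_, h⟩ := by
    obtain ⟨v, hv⟩ := hpos z hz
    exact hmem z hz z₀ hz₀ ▸ hS.exists_challenge hv hA ⟨z, hz, hv⟩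
  obtain ⟨hchoice, -⟩ := challenge z₀ hz₀
  obtain ⟨v, ⟨y, hyZ, hyv⟩, hposition, hanswer⟩ := hS.exists_answer hchoice
  obtain rfl : y = ⟨(.position v, z₀.1.2), hposition⟩ :=
    Subtype.ext (Prod.ext hyv (hmem y hyZ z₀ hz₀))
  refine ⟨_, hyZ, fun z hz ↦ ?_⟩
  obtain ⟨_, hz⟩ := challenge z hz
  exact epsClosure_mono hz.epsClosure hanswer.epsClosure (S.epsClosure_refl _)

theorem isEpsWellPreordered_positions
    (hS : IsEpsStrategy G.choiceGame (choiceEve V) v₀ D S s₀) :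
    IsEpsWellPreordered
      (S.epsClosure.comap ((↑) : {s : D // ∃ v, s.1.1 = .position v} → D)) (fun s ↦ s.1.1.2) where
  refl _ := S.epsClosure_refl _
  mono _ _ _ _ _ h he h' := epsClosure_mono h he h'
  sameFiber _ _ he := eq_of_epsClosure_edge_none hS.2 he
  exists_least Z hZ hfiber := by
    obtain ⟨_, ⟨y, hy, rfl⟩, hmin⟩ := hS.exists_least (hZ.image Subtype.val)
      (by rintro _ ⟨z, -, rfl⟩; exact z.2)
      (by rintro _ ⟨z, hz, rfl⟩ _ ⟨z', hz', rfl⟩; exact hfiber z hz z' hz')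
    exact ⟨y, hy, fun z hz ↦ hmin z ⟨z, hz, rfl⟩⟩

end IsEpsStrategy

/-! ### From ε-memory to universal graphs -/

theorem epsExtension_objValuation {C : Type u} {W : Set (ℕ → C)} {w : ℕ → Option C} :
    epsExtension (objValuation W) w ↔ w ∉ epsObjective W := by
  rw [epsExtension, sInf_Prop_eq]
  constructor
  · rintro h ⟨w', hw', hW⟩
    exact h _ ⟨w', hw', rfl⟩ hW
  · rintro h _ ⟨w', hw', rfl⟩ hW
    exact h ⟨w', hw', hW⟩

theorem valueAt_epsExtension_objValuation {C V : Type u} {W : Set (ℕ → C)}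
    {G : Pregraph (Option C) V} {v : V} :
    G.valueAt (epsExtension (objValuation W)) v ↔ ¬ G.VertexSat (epsObjective W) v := by
  simp only [valueAt, sSup_Prop_eq, VertexSat, Set.mem_ofPred_eq, not_forall, exists_prop]
  constructor
  · rintro ⟨_, ⟨π, γ, h0, hπ, rfl⟩, hγ⟩
    exact ⟨π, γ, h0, hπ, epsExtension_objValuation.1 hγ⟩
  · rintro ⟨π, γ, h0, hπ, hγ⟩
    exact ⟨_, ⟨π, γ, h0, hπ, rfl⟩, epsExtension_objValuation.2 hγ⟩

namespace HasEpsMemLE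

variable {C V : Type u} {W : Set (ℕ → C)} {μ : Cardinal.{u}}

theorem exists_epsStrategy (hmem : HasEpsMemLE (objValuation W) μ) {G : Pregraph (Option C) V}
    (hG : G.NoSinks) (VEve : Set V) (v₀ : V) :
    ∃ (M : Type u) (D : Set (V × M)) (S : Pregraph (Option C) D) (s₀ : D),
      #M ≤ μ ∧ IsEpsStrategy G VEve v₀ D S s₀ ∧
        ∀ {VS : Type u} {S' : Pregraph (Option C) VS} {π : VS → V} {s : VS},
          IsStrategy G VEve v₀ S' π s → S'.VertexSat (epsObjective W) s →
            S.VertexSat (epsObjective W) s₀ := by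
  obtain ⟨M, D, S, s₀, hM, hS, hval⟩ := hmem V G hG VEve v₀
  refine ⟨M, D, S, s₀, hM, hS, fun {VS S' π s} hS' hsat ↦ ?_⟩
  have hle : S.valueAt (epsExtension (objValuation W)) s₀ ≤ S'.valueAt _ s :=
    hval.trans (sInf_le ⟨VS, S', π, s, hS', rfl⟩)
  by_contra hs₀
  exact valueAt_epsExtension_objValuation.1 (hle (valueAt_epsExtension_objValuation.2 hs₀)) hsat

theorem exists_isEpsSeparated_simulation (hmem : HasEpsMemLE (objValuation W) μ)
    {G : Pregraph (Option C) V} (hG : G.NoSinks) (r : V) :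
    ∃ (VU M : Type u) (U : Pregraph (Option C) VU) (part : VU → M) (R : V → VU → Prop) (u : VU),
      IsEpsSeparated U part ∧ EpsWellFounded U ∧ #M ≤ μ ∧ G.IsSimulation U R ∧ R r u ∧
        (G.VertexSat (epsObjective W) r → U.VertexSat (epsObjective W) u) := by
  obtain ⟨M, D, S, s₀, hM, hS, hsat⟩ :=
    hmem.exists_epsStrategy (choiceGame_noSinks hG) (choiceEve V) (.position r)
  obtain ⟨VU, U, part, proj, hU, hwf, hproj, hprojsat⟩ :=
    hS.isEpsWellPreordered_positions.exists_isEpsSeparated_quotient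
  refine ⟨VU, M, U, part, fun v u ↦ ∃ s, s.1.1.1 = .position v ∧ proj s = u,
    proj ⟨s₀, r, hS.1.2.2.1⟩, hU, hwf, hM, ?_, ⟨_, hS.1.2.2.1, rfl⟩, fun hr ↦ ?_⟩
  · rintro v _ ⟨s, hs, rfl⟩ c v' he
    obtain ⟨s', hs', hss'⟩ := hS.1.isSimulation_choiceGame hs he
    exact ⟨_, ⟨⟨s', v', hs'⟩, hs', rfl⟩, hproj hss'.epsClosure⟩
  · have hs₀ := hsat (shadowStrategy_isStrategy hG r) (shadowStrategy_vertexSat hG hr)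
    exact hprojsat _ _ ((hs₀.epsClosure hS.1.1).of_isMorphism (isMorphism_comap _ _))

theorem exists_isEpsSeparated_forall_vertexSat (hmem : HasEpsMemLE (objValuation W) μ)
    (K : Type u) :
    ∃ (VU M : Type u) (U : Pregraph (Option C) VU) (part : VU → M),
      IsEpsSeparated U part ∧ EpsWellFounded U ∧ #M ≤ μ ∧ Nonempty M ∧
        ∀ {VT : Type u} {T : Pregraph (Option C) VT} {t₀ : VT}, T.IsTree t₀ → #VT ≤ #K →
          T.VertexSat (epsObjective W) t₀ →
            ∃ φ : VT → VU, T.IsMorphism U φ ∧ U.VertexSat (epsObjective W) (φ t₀) := by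
  let G (i : SatRootedGraph (epsObjective W) K) : Pregraph (Option C) K := i.1.1
  let r (i : SatRootedGraph (epsObjective W) K) : K := i.1.2
  obtain ⟨VU, M, U, part, R, u, hU, hwf, hM, hR, hru, hsat⟩ :=
    hmem.exists_isEpsSeparated_simulation (rootedSum_noSinks (G := G) (r := r) fun i ↦ i.2.1) none
  refine ⟨VU, M, U, part, hU, hwf, hM, ⟨part u⟩, fun {VT T t₀} hT hK ht₀ ↦ ?_⟩
  obtain ⟨i, φ, hφ, hφt₀⟩ := exists_satRootedGraph_isMorphism hT.1 ht₀ hK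
  have : Nonempty (SatRootedGraph (epsObjective W) K) := ⟨i⟩
  obtain ⟨u', hu', huu'⟩ := hR hru (.enter i)
  have hTR : T.IsSimulation U (fun t x ↦ R (some ⟨i, φ t⟩) x) :=
    fun t x htx c t' he ↦ hR htx (.move (hφ he))
  obtain ⟨ψ, hψ, rfl⟩ := hT.2.exists_isMorphism hTR (s₀ := u') (by rwa [hφt₀])
  have hu : U.VertexSat (epsObjective W) u :=
    hsat (rootedSum_vertexSat_root (fun i ↦ i.2.1) fun i ↦ i.2.2)
  exact ⟨ψ, hψ, hu.of_edge_none hU.refl hU.mono huu'⟩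

end HasEpsMemLE

/-- If an objective `W` has ε-memory ≤ μ, then for every cardinal `κ`
there is an ε-separated well-monotone graph of breadth ≤ μ which is `(κ, Wᵋ)`-universal. -/
theorem epsMemory_implies_epsSeparated_universal
    {C : Type u} (W : Set (ℕ → C)) (μ : Cardinal.{u})
    (hmem : HasEpsMemLE (objValuation W) μ) :
    ∀ κ : Cardinal.{u},
      ∃ (VU : Type u) (M : Type u) (U : Pregraph (Option C) VU) (part : VU → M),
        IsEpsSeparated U part ∧ EpsWellFounded U ∧ #M ≤ μ ∧
        IsUniversal κ (epsExtension (objValuation W)) U := by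
  intro κ
  obtain ⟨VU, M, U, part, hU, hwf, hM, ⟨m⟩, huniv⟩ :=
    hmem.exists_isEpsSeparated_forall_vertexSat κ.out
  refine ⟨Option VU, M, U.addTop part m, fun x ↦ x.elim m part, hU.addTop m, hwf.addTop part m,
    hM, fun VT T t₀ hT hκ ↦ ?_⟩
  by_cases ht₀ : T.VertexSat (epsObjective W) t₀
  · obtain ⟨φ, hφ, hsat⟩ := huniv hT (κ.mk_out.symm ▸ hκ.le) ht₀
    exact ⟨fun t ↦ some (φ t), fun _ _ _ he ↦ hφ he,
      fun hval ↦ absurd hsat.addTop (valueAt_epsExtension_objValuation.1 hval)⟩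
  · exact ⟨fun _ ↦ none, fun _ _ _ _ _ ↦ rfl,
      fun _ ↦ valueAt_epsExtension_objValuation.2 ht₀⟩
end

section
/- Let W ⊆ C^ω be a topologically closed objective and suppose that the set Res(W) of left quotients of W, ordered by inclusion, is well-founded and has width < μ. Then W has ε-free memory < μ; moreover, if μ is finite, W also has ε-memory < μ. -/
universe u v

open Cardinal

/-- Prepending a finite word to an infinite word. -/
def listAppend {C : Type u} (u : List C) (w : ℕ → C) : ℕ → C :=
  fun n => if h : n < u.length then u.get ⟨n, h⟩ else w (n - u.length)

/-- An objective is prefix-independent when it is invariant under adding/removing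
finite prefixes. -/
def PrefixIndependent {C : Type u} (W : Set (ℕ → C)) : Prop :=
  ∀ (u : List C) (w : ℕ → C), listAppend u w ∈ W ↔ w ∈ W

/-- The prefix of length `k` of an infinite word. -/
def prefixWord {C : Type u} (w : ℕ → C) (k : ℕ) : List C :=
  List.ofFn (fun i : Fin k => w i)

/-- The safety objective associated with a language `L` of finite words. -/
def SafeObj {C : Type u} (L : Set (List C)) : Set (ℕ → C) :=
  {w | ∀ k, prefixWord w k ∉ L}

/-- Topologically closed objectives are exactly the safety objectives. -/
def TopologicallyClosed {C : Type u} (W : Set (ℕ → C)) : Prop :=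
  ∃ L : Set (List C), W = SafeObj L

/-- The left quotient `u⁻¹W`. -/
def leftQuot {C : Type u} (u : List C) (W : Set (ℕ → C)) : Set (ℕ → C) :=
  {w | listAppend u w ∈ W}

/-- The set of left quotients of `W`, ordered by inclusion. -/
def Res {C : Type u} (W : Set (ℕ → C)) : Set (Set (ℕ → C)) :=
  {Q | ∃ u : List C, Q = leftQuot u W}

/-- Prepending one letter to an infinite word. -/
def consSeq {C : Type u} (c : C) (w : ℕ → C) : ℕ → C :=
  fun n => match n with
  | 0 => c
  | n + 1 => w n

/-- One-letter derivative: `wordDeriv A c = {w | c·w ∈ A}`, so that `[uc] = wordDeriv [u] c`. -/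
def wordDeriv {C : Type u} (A : Set (ℕ → C)) (c : C) : Set (ℕ → C) :=
  {w | consSeq c w ∈ A}

/-- `(κ, W)`-universality for an objective: every tree of cardinality < κ maps into `U`
by a morphism preserving the value at the root (if the root satisfies `W`, so does its
image). -/
def IsUniversalObj {C VU : Type u} (κ : Cardinal.{u}) (W : Set (ℕ → C))
    (U : Pregraph C VU) : Prop :=
  ∀ (VT : Type u) (T : Pregraph C VT) (t₀ : VT), T.IsTree t₀ → #VT < κ →
    ∃ φ : VT → VU, T.IsMorphism U φ ∧ (T.VertexSat W t₀ → U.VertexSat W (φ t₀))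

/-- Eve wins a game with objective `W`: there exists a winning strategy. -/
def EveWins {C V : Type u} (G : Pregraph C V) (VEve : Set V) (v₀ : V)
    (W : Set (ℕ → C)) : Prop :=
  ∃ (VS : Type u) (S : Pregraph C VS) (πS : VS → V) (s₀ : VS),
    IsStrategy G VEve v₀ S πS s₀ ∧ S.VertexSat W s₀

/-- An objective has ε-memory ≤ μ: in every ε-game that Eve wins, she has a winning
ε-strategy of memory ≤ μ. -/
def ObjEpsMemLE {C : Type u} (W : Set (ℕ → C)) (μ : Cardinal.{u}) : Prop :=
  ∀ (V : Type u) (G : Pregraph (Option C) V), G.NoSinks → ∀ (VEve : Set V) (v₀ : V),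
    EveWins G VEve v₀ (epsObjective W) →
    ∃ (M : Type u) (D : Set (V × M)) (S : Pregraph (Option C) ↥D) (s₀ : ↥D),
      #M ≤ μ ∧ IsEpsStrategy G VEve v₀ D S s₀ ∧ S.VertexSat (epsObjective W) s₀

/-- An objective has ε-memory < μ: in every ε-game that Eve wins, she has a winning
ε-strategy of memory < μ. -/
def ObjEpsMemLT {C : Type u} (W : Set (ℕ → C)) (μ : Cardinal.{u}) : Prop :=
  ∀ (V : Type u) (G : Pregraph (Option C) V), G.NoSinks → ∀ (VEve : Set V) (v₀ : V),
    EveWins G VEve v₀ (epsObjective W) →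
    ∃ (M : Type u) (D : Set (V × M)) (S : Pregraph (Option C) ↥D) (s₀ : ↥D),
      #M < μ ∧ IsEpsStrategy G VEve v₀ D S s₀ ∧ S.VertexSat (epsObjective W) s₀

/-- An objective has ε-free memory < μ: in every game that Eve wins, she has a winning
strategy all of whose fibres have cardinality < μ. -/
def ObjMemLT {C : Type u} (W : Set (ℕ → C)) (μ : Cardinal.{u}) : Prop :=
  ∀ (V : Type u) (G : Pregraph C V), G.NoSinks → ∀ (VEve : Set V) (v₀ : V),
    EveWins G VEve v₀ W →
    ∃ (VS : Type u) (S : Pregraph C VS) (πS : VS → V) (s₀ : VS),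
      IsStrategy G VEve v₀ S πS s₀ ∧ (∀ v : V, #(↥(πS ⁻¹' {v})) < μ) ∧
      S.VertexSat W s₀

/-!
Residuals serve as memory. At a vertex `v` it suffices to remember a left quotient `Q` of `W` for
which Eve wins from `v`, and a smaller `Q` is a stronger promise, so by well-foundedness she may
keep to the minimal ones. These form an antichain, which bounds the `ε`-free memory.

When `ε` must not change the memory, split the left quotients into `μ - 1` chains by Dilworth's
theorem, and let a memory state be a chain, standing at `v` for its least element for which Eve wins
from `v`. An `ε`-move keeps the current quotient winning, hence its chain available, and the least
winning element of that chain at the new vertex can only be smaller.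
-/

section ChainColoring

variable {α : Type*}

theorem exists_coloring_of_injective_sum [Preorder α] [WellFoundedGT α] {ι : Type*}
    (f : α → α ⊕ ι) (hinj : f.Injective) (hlt : ∀ x y, f x = .inl y → x < y) :
    ∃ color : α → ι, ∀ i, IsChain (· ≤ ·) (color ⁻¹' {i}) := by
  let follows : α → α → Prop := fun y x => f x = .inl y
  have le_of_follows {x y : α} (h : Relation.ReflTransGen follows y x) : x ≤ y := by
    induction h with
    | refl => exact le_rfl
    | tail _ hstep ih => exact (hlt _ _ hstep).le.trans ih
  have exists_end (x : α) : ∃ i z, Relation.ReflTransGen follows z x ∧ f z = .inr i := by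
    induction x using WellFoundedGT.induction with
    | ind x ih =>
      cases hx : f x with
      | inr i => exact ⟨i, x, .refl, hx⟩
      | inl y =>
        obtain ⟨i, z, hzy, hz⟩ := ih y (hlt x y hx)
        exact ⟨i, z, hzy.tail hx, hz⟩
  choose color last hlast hcolor using exists_end
  have rightUnique : Relator.RightUnique follows := fun _ _ _ hx hy => hinj (hx.trans hy.symm)
  refine ⟨color, fun i x hx y hy _ => ?_⟩
  have hxy : last x = last y := hinj <| by
    rw [hcolor, hcolor, Set.mem_singleton_iff.1 hx, Set.mem_singleton_iff.1 hy]
  exact (Relation.ReflTransGen.total_of_right_unique rightUnique (hlast x)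
    (hxy ▸ hlast y)).symm.imp le_of_follows le_of_follows

-- The matching proof of Dilworth by Fulkerson: a matching of the strict order that leaves at most
-- `n` elements unmatched glues `α` into `n` chains. Once `n` dummy targets are added, the condition
-- of Hall holds because the elements of `A` above no other element of `A` form an antichain.
theorem exists_chain_coloring_of_finite [PartialOrder α] [Finite α] (n : ℕ)
    (hwidth : ∀ A : Finset α, IsAntichain (· ≤ ·) (A : Set α) → A.card ≤ n) :
    ∃ color : α → Fin n, ∀ i, IsChain (· ≤ ·) (color ⁻¹' {i}) := by
  classical
  have := Fintype.ofFinite α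
  let matchable : α → α ⊕ Fin n → Prop := fun x => Sum.elim (x < ·) fun _ => True
  have hall (A : Finset α) :
      A.card ≤ ({b | ∃ x ∈ A, matchable x b} : Finset (α ⊕ Fin n)).card := by
    obtain rfl | hA := A.eq_empty_or_nonempty
    · simp
    let above : Finset α := {y | ∃ x ∈ A, x < y}
    have neighbors_eq : ({b | ∃ x ∈ A, matchable x b} : Finset (α ⊕ Fin n)) =
        above.disjSum Finset.univ := by
      ext (y | i) <;> simp [matchable, above, hA.exists_mem]
    have antichain : IsAntichain (· ≤ ·) ((A \ above : Finset α) : Set α) := by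
      intro x hx y hy hne hle
      have hx := Finset.mem_sdiff.1 hx
      have hy := Finset.mem_sdiff.1 hy
      exact hy.2 (Finset.mem_filter.2 ⟨Finset.mem_univ y, x, hx.1, hle.lt_of_ne hne⟩)
    calc A.card ≤ (A \ above).card + above.card := Finset.card_le_card_sdiff_add_card
      _ ≤ n + above.card := by gcongr; exact hwidth _ antichain
      _ = _ := by rw [neighbors_eq, Finset.card_disjSum, Finset.card_fin, add_comm]
  obtain ⟨f, hinj, hf⟩ := (Fintype.all_card_le_filter_rel_iff_exists_injective matchable).1 hall
  exact exists_coloring_of_injective_sum f hinj fun x y hxy => by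
    simpa only [matchable, hxy, Sum.elim_inl] using hf x

theorem exists_chain_coloring [PartialOrder α] (n : ℕ)
    (hwidth : ∀ A : Finset α, IsAntichain (· ≤ ·) (A : Set α) → A.card ≤ n) :
    ∃ color : α → Fin n, ∀ i, IsChain (· ≤ ·) (color ⁻¹' {i}) := by
  classical
  have hfinite (s : Finset α) : ∃ color : s → Fin n, ∀ i, IsChain (· ≤ ·) (color ⁻¹' {i}) := by
    refine exists_chain_coloring_of_finite n fun A hA => ?_
    rw [← Finset.card_map (Function.Embedding.subtype _)]
    refine hwidth _ ?_
    rw [Finset.coe_map]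
    exact hA.image_embedding (OrderEmbedding.subtype _)
  choose colorOn hcolorOn using hfinite
  obtain ⟨color, hcolor⟩ := Finset.rado_selection_subtype (β := fun _ => Fin n) colorOn
  refine ⟨color, fun i x hx y hy hne => ?_⟩
  obtain ⟨t, hst, ht⟩ := hcolor {x, y}
  have hxt := ht ⟨x, by simp⟩
  have hyt := ht ⟨y, by simp⟩
  exact hcolorOn t i (hxt.symm.trans hx) (hyt.symm.trans hy) fun h => hne (congrArg Subtype.val h)

theorem exists_isLeast_of_isChain [Preorder α] [WellFoundedLT α] {s : Set α}
    (hs : IsChain (· ≤ ·) s) (hne : s.Nonempty) : ∃ a, IsLeast s a := by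
  obtain ⟨a, ha⟩ := exists_minimal_of_wellFoundedLT (· ∈ s) hne
  exact ⟨a, ha.prop, fun b hb => (hs.total ha.prop hb).elim id (ha.le_of_le hb)⟩

end ChainColoring

section Words

variable {C : Type u} {W Q Q' : Set (ℕ → C)}

theorem listAppend_nil (w : ℕ → C) : listAppend [] w = w := by
  funext n
  simp [listAppend]

theorem listAppend_cons (c : C) (l : List C) (w : ℕ → C) :
    listAppend (c :: l) w = consSeq c (listAppend l w) := by
  funext n
  cases n <;> simp [listAppend, consSeq]

theorem listAppend_append (l l' : List C) (w : ℕ → C) :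
    listAppend (l ++ l') w = listAppend l (listAppend l' w) := by
  induction l with
  | nil => rw [List.nil_append, listAppend_nil]
  | cons c l ih => rw [List.cons_append, listAppend_cons, listAppend_cons, ih]

theorem consSeq_head_tail (w : ℕ → C) : consSeq (w 0) (fun n => w (n + 1)) = w := by
  funext n
  cases n <;> rfl

theorem prefixWord_zero (w : ℕ → C) : prefixWord w 0 = [] :=
  List.ofFn_zero

theorem prefixWord_consSeq_succ (c : C) (w : ℕ → C) (k : ℕ) :
    prefixWord (consSeq c w) (k + 1) = c :: prefixWord w k :=
  List.ofFn_succ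

theorem prefixWord_succ (w : ℕ → C) (k : ℕ) : prefixWord w (k + 1) = prefixWord w k ++ [w k] :=
  List.ofFn_succ_last

theorem prefixWord_mono (w : ℕ → C) {j k : ℕ} (hjk : j ≤ k) :
    prefixWord w j <+: prefixWord w k := by
  induction k, hjk using Nat.le_induction with
  | base => exact List.prefix_rfl
  | succ k _ ih => exact ih.trans (prefixWord_succ w k ▸ List.prefix_append _ _)

theorem prefixWord_listAppend (l : List C) (w : ℕ → C) :
    prefixWord (listAppend l w) l.length = l := by
  induction l with
  | nil => exact prefixWord_zero _
  | cons c l ih => rw [listAppend_cons, List.length_cons, prefixWord_consSeq_succ, ih]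

theorem listAppend_prefixWord (w : ℕ → C) (k : ℕ) :
    listAppend (prefixWord w k) (fun n => w (k + n)) = w := by
  funext n
  by_cases hn : n < k
  · simp [listAppend, prefixWord, hn]
  · simp [listAppend, prefixWord, hn, Nat.add_sub_cancel' (not_lt.1 hn)]

theorem exists_word_of_prefix_chain (p : ℕ → List C) (hp : ∀ ⦃j k⦄, j ≤ k → p j <+: p k)
    (hunbounded : ∀ n, ∃ k, n < (p k).length) :
    ∃ w, ∀ k, prefixWord w (p k).length = p k := by
  choose k hk using hunbounded
  refine ⟨fun n => (p (k n))[n]'(hk n), fun j => List.ext_getElem (by simp [prefixWord]) ?_⟩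
  intro n _ hn
  simp only [prefixWord, List.getElem_ofFn]
  rcases le_total (k n) j with h | h
  · exact (hp h).getElem (hk n)
  · exact ((hp h).getElem hn).symm

theorem leftQuot_nil (W : Set (ℕ → C)) : leftQuot [] W = W := by
  ext w
  exact iff_of_eq (congrArg (· ∈ W) (listAppend_nil w))

theorem leftQuot_append (l l' : List C) (W : Set (ℕ → C)) :
    leftQuot (l ++ l') W = leftQuot l' (leftQuot l W) := by
  ext w
  exact iff_of_eq (congrArg (· ∈ W) (listAppend_append l l' w))

theorem leftQuot_singleton (c : C) (W : Set (ℕ → C)) : leftQuot [c] W = wordDeriv W c := by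
  ext w
  exact iff_of_eq (congrArg (· ∈ W) (by rw [listAppend_cons, listAppend_nil]))

theorem leftQuot_cons (c : C) (l : List C) (W : Set (ℕ → C)) :
    leftQuot (c :: l) W = leftQuot l (wordDeriv W c) := by
  rw [← leftQuot_singleton, ← leftQuot_append, List.singleton_append]

theorem leftQuot_mono (l : List C) (h : Q ⊆ Q') : leftQuot l Q ⊆ leftQuot l Q' :=
  fun _ hw => h hw

theorem leftQuot_nonempty_antitone {l l' : List C} (hl : l <+: l')
    (h : (leftQuot l' W).Nonempty) : (leftQuot l W).Nonempty := by
  obtain ⟨t, rfl⟩ := hl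
  obtain ⟨w, hw⟩ := h
  exact ⟨listAppend t w, by rwa [leftQuot_append] at hw⟩

theorem self_mem_res (W : Set (ℕ → C)) : W ∈ Res W :=
  ⟨[], (leftQuot_nil W).symm⟩

theorem leftQuot_mem_res (l : List C) (hQ : Q ∈ Res W) : leftQuot l Q ∈ Res W := by
  obtain ⟨l', rfl⟩ := hQ
  exact ⟨l' ++ l, (leftQuot_append l' l W).symm⟩

theorem wordDeriv_mem_res (c : C) (hQ : Q ∈ Res W) : wordDeriv Q c ∈ Res W :=
  leftQuot_singleton c Q ▸ leftQuot_mem_res [c] hQ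

theorem topologicallyClosed_iff :
    TopologicallyClosed W ↔ ∀ w, (∀ k, (leftQuot (prefixWord w k) W).Nonempty) → w ∈ W := by
  constructor
  · rintro ⟨L, rfl⟩ w hw k hk
    obtain ⟨x, hx⟩ := hw k
    have hword := hx (prefixWord w k).length
    rw [prefixWord_listAppend] at hword
    exact hword hk
  · refine fun h => ⟨{l | ¬(leftQuot l W).Nonempty}, Set.Subset.antisymm ?_ ?_⟩
    · exact fun w hw k hk => hk ⟨_, (listAppend_prefixWord w k).symm ▸ hw⟩
    · exact fun w hw => h w fun k => not_not.1 (hw k)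

end Words

section EpsObjective

variable {C : Type u} {W Q Q' : Set (ℕ → C)} {γ : ℕ → Option C} {w : ℕ → C}

theorem reduceOption_prefixWord (γ : ℕ → Option C) (k : ℕ) :
    (prefixWord γ k).reduceOption = (List.range k).filterMap γ := by
  induction k with
  | zero => rfl
  | succ k ih =>
    rw [prefixWord_succ, List.reduceOption_append, List.reduceOption_singleton, ih,
      List.range_succ, List.filterMap_append]
    cases h : γ k <;> simp [h]

theorem isCompletion_iff_prefixWord :
    IsCompletion γ w ↔ ∀ k, prefixWord w (prefixWord γ k).reduceOption.length =
      (prefixWord γ k).reduceOption := by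
  refine forall_congr' fun k => ?_
  rw [reduceOption_prefixWord]
  constructor
  · intro h
    refine List.ext_getElem (by simp [prefixWord]) fun n _ hn => ?_
    simpa [prefixWord] using (h n hn).symm
  · intro h n hn
    rw [List.get_eq_getElem, List.getElem_of_eq h.symm]
    simp [prefixWord]

theorem isCompletion_consSeq_none : IsCompletion (consSeq none γ) w ↔ IsCompletion γ w := by
  simp only [isCompletion_iff_prefixWord]
  rw [← Nat.and_forall_add_one]
  simp [prefixWord_consSeq_succ, prefixWord_zero]

theorem isCompletion_consSeq_some {c d : C} :
    IsCompletion (consSeq (some c) γ) (consSeq d w) ↔ d = c ∧ IsCompletion γ w := by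
  simp only [isCompletion_iff_prefixWord]
  rw [← Nat.and_forall_add_one]
  simp [prefixWord_consSeq_succ, prefixWord_zero, forall_and]

theorem epsObjective_mono (h : Q ⊆ Q') : epsObjective Q ⊆ epsObjective Q' :=
  fun _ ⟨w, hw, hwQ⟩ => ⟨w, hw, h hwQ⟩

theorem nonempty_of_epsObjective_nonempty (h : (epsObjective Q).Nonempty) : Q.Nonempty :=
  let ⟨_, w, _, hw⟩ := h
  ⟨w, hw⟩

theorem wordDeriv_epsObjective (Q : Set (ℕ → C)) (c : Option C) :
    wordDeriv (epsObjective Q) c = epsObjective (leftQuot c.toList Q) := by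
  ext γ
  cases c with
  | none =>
    rw [Option.toList_none, leftQuot_nil]
    exact exists_congr fun w => and_congr_left' isCompletion_consSeq_none
  | some c =>
    rw [Option.toList_some, leftQuot_singleton]
    constructor
    · rintro ⟨w, hw, hwQ⟩
      rw [← consSeq_head_tail w] at hw hwQ
      obtain ⟨hhead, htail⟩ := isCompletion_consSeq_some.1 hw
      exact ⟨_, htail, hhead ▸ hwQ⟩
    · rintro ⟨w, hw, hwQ⟩
      exact ⟨consSeq c w, isCompletion_consSeq_some.2 ⟨rfl, hw⟩, hwQ⟩

theorem leftQuot_epsObjective (l : List (Option C)) (Q : Set (ℕ → C)) :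
    leftQuot l (epsObjective Q) = epsObjective (leftQuot l.reduceOption Q) := by
  induction l generalizing Q with
  | nil => rw [List.reduceOption_nil, leftQuot_nil, leftQuot_nil]
  | cons c l ih =>
    rw [leftQuot_cons, wordDeriv_epsObjective, ih, ← leftQuot_append, ← List.singleton_append,
      List.reduceOption_append, List.reduceOption_singleton]

protected theorem TopologicallyClosed.epsObjective (hW : TopologicallyClosed W) :
    TopologicallyClosed (epsObjective W) := by
  refine topologicallyClosed_iff.2 fun γ hγ => ?_
  let p : ℕ → List C := fun k => (prefixWord γ k).reduceOption
  have hp ⦃j k : ℕ⦄ (hjk : j ≤ k) : p j <+: p k := (prefixWord_mono γ hjk).reduceOption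
  have hne (k : ℕ) : (leftQuot (p k) W).Nonempty :=
    nonempty_of_epsObjective_nonempty (leftQuot_epsObjective _ W ▸ hγ k)
  by_cases hmax : ∃ K, ∀ k, (p k).length ≤ (p K).length
  · obtain ⟨K, hK⟩ := hmax
    obtain ⟨x, hx⟩ := hne K
    refine ⟨listAppend (p K) x, isCompletion_iff_prefixWord.2 fun k => ?_, hx⟩
    have hkK : p k <+: p K := (le_total k K).elim (hp ·) fun h =>
      ((hp h).eq_of_length_le (hK k)).symm ▸ List.prefix_rfl
    obtain ⟨t, ht⟩ := hkK
    rw [← ht, listAppend_append]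
    exact prefixWord_listAppend (p k) _
  · push Not at hmax
    have hunbounded (n : ℕ) : ∃ k, n < (p k).length := by
      induction n with
      | zero => exact (hmax 0).imp fun k hk => Nat.zero_lt_of_lt hk
      | succ n ih =>
        obtain ⟨k, hk⟩ := ih
        exact (hmax k).imp fun k' hk' => Nat.lt_of_le_of_lt hk hk'
    obtain ⟨w, hw⟩ := exists_word_of_prefix_chain p hp hunbounded
    refine ⟨w, isCompletion_iff_prefixWord.2 hw, topologicallyClosed_iff.1 hW w fun n => ?_⟩
    obtain ⟨k, hk⟩ := hunbounded n
    exact leftQuot_nonempty_antitone (hw k ▸ prefixWord_mono w hk.le) (hne k)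

end EpsObjective

section Strategies

variable {A V VS : Type u} {G : Pregraph A V} {VEve : Set V} {O : Set (ℕ → A)}

namespace Pregraph

theorem NoSinks.exists_infPath (hG : G.NoSinks) (v : V) : ∃ π γ, π 0 = v ∧ G.InfPath π γ := by
  choose c next hnext using hG
  exact ⟨fun n => next^[n] v, fun n => c (next^[n] v), rfl, fun n => by
    simpa only [Function.iterate_succ_apply'] using hnext (next^[n] v)⟩

protected theorem VertexSat.wordDeriv {v v' : V} {c : A} (h : G.VertexSat O v)
    (he : G.Edge v c v') : G.VertexSat (wordDeriv O c) v' := by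
  rintro π γ rfl hπ
  refine h (consSeq v π) (consSeq c γ) rfl fun i => ?_
  cases i with
  | zero => exact he
  | succ i => exact hπ i

end Pregraph

namespace EveWins

theorem nonempty {v : V} (h : EveWins G VEve v O) : O.Nonempty := by
  obtain ⟨VS, S, πS, s, ⟨hS, -⟩, hsat⟩ := h
  obtain ⟨π, γ, h0, hπ⟩ := hS.exists_infPath s
  exact ⟨γ, hsat π γ h0 hπ⟩

theorem exists_edge {v : V} (h : EveWins G VEve v O) :
    ∃ c v', G.Edge v c v' ∧ EveWins G VEve v' (wordDeriv O c) := by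
  obtain ⟨VS, S, πS, s, ⟨hS, hπS, rfl, hAdam⟩, hsat⟩ := h
  obtain ⟨c, s', he⟩ := hS s
  exact ⟨c, πS s', hπS he, VS, S, πS, s', ⟨hS, hπS, rfl, hAdam⟩, hsat.wordDeriv he⟩

theorem of_adam_edge {v v' : V} {c : A} (h : EveWins G VEve v O) (hv : v ∉ VEve)
    (he : G.Edge v c v') : EveWins G VEve v' (wordDeriv O c) := by
  obtain ⟨VS, S, πS, s, ⟨hS, hπS, hs, hAdam⟩, hsat⟩ := h
  obtain ⟨s', hs', hes⟩ := hAdam v hv c v' he s hs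
  exact ⟨VS, S, πS, s', ⟨hS, hπS, hs', hAdam⟩, hsat.wordDeriv hes⟩

end EveWins

/-- A labelling `ℓ` of the states of a candidate strategy `S` by objectives: in each state Eve can
still win for its label, each edge shrinks the label at least as much as reading its colour does,
and `S` has an edge above every move of `G` that keeps the derived label winnable. -/
structure IsWinningLabelling (G : Pregraph A V) (VEve : Set V) (S : Pregraph A VS) (πS : VS → V)
    (ℓ : VS → Set (ℕ → A)) : Prop where
  isMorphism : S.IsMorphism G πS
  eveWins : ∀ s, EveWins G VEve (πS s) (ℓ s)
  subset_wordDeriv : ∀ ⦃s c s'⦄, S.Edge s c s' → ℓ s' ⊆ wordDeriv (ℓ s) c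
  exists_edge : ∀ s c v', G.Edge (πS s) c v' → EveWins G VEve v' (wordDeriv (ℓ s) c) →
    ∃ s', πS s' = v' ∧ S.Edge s c s'

namespace IsWinningLabelling

variable {S : Pregraph A VS} {πS : VS → V} {ℓ : VS → Set (ℕ → A)}

theorem isStrategy (h : IsWinningLabelling G VEve S πS ℓ) (s₀ : VS) :
    IsStrategy G VEve (πS s₀) S πS s₀ := by
  refine ⟨fun s => ?_, h.isMorphism, rfl, ?_⟩
  · obtain ⟨c, v', he, hwin⟩ := (h.eveWins s).exists_edge
    obtain ⟨s', -, hes⟩ := h.exists_edge s c v' he hwin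
    exact ⟨c, s', hes⟩
  · rintro _ hv c v' he s rfl
    exact h.exists_edge s c v' he ((h.eveWins s).of_adam_edge hv he)

-- The label reached after reading `u` is contained in `u⁻¹O`, and labels are nonempty because Eve
-- wins for them: no finite prefix of a play leaves `O`.
theorem vertexSat (h : IsWinningLabelling G VEve S πS ℓ) (hO : TopologicallyClosed O) {s₀ : VS}
    (hs₀ : ℓ s₀ ⊆ O) : S.VertexSat O s₀ := by
  rintro π γ rfl hπ
  have label_subset (k : ℕ) : ℓ (π k) ⊆ leftQuot (prefixWord γ k) O := by
    induction k with
    | zero => rwa [prefixWord_zero, leftQuot_nil]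
    | succ k ih =>
      rw [prefixWord_succ, leftQuot_append]
      calc ℓ (π (k + 1)) ⊆ wordDeriv (ℓ (π k)) (γ k) := h.subset_wordDeriv (hπ k)
        _ = leftQuot [γ k] (ℓ (π k)) := (leftQuot_singleton _ _).symm
        _ ⊆ _ := leftQuot_mono _ ih
  exact topologicallyClosed_iff.1 hO γ fun k => (h.eveWins (π k)).nonempty.mono (label_subset k)

end IsWinningLabelling

end Strategies

section Memory

variable {C : Type u} {W : Set (ℕ → C)} [WellFoundedLT (Res W)] {μ : Cardinal.{u}}

theorem TopologicallyClosed.objMemLT (hW : TopologicallyClosed W)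
    (hwidth : ∀ S : Set (Res W), IsAntichain (· ≤ ·) S → #S < μ) : ObjMemLT W μ := by
  intro V G _ VEve v₀ hwin
  let winning (v : V) (Q : Res W) : Prop := EveWins G VEve v (Q : Set (ℕ → C))
  let S : Pregraph C (Σ v, {Q // Minimal (winning v) Q}) :=
    ⟨fun s c s' => G.Edge s.1 c s'.1 ∧ (s'.2.1 : Set (ℕ → C)) ⊆ wordDeriv s.2.1 c⟩
  have labelling : IsWinningLabelling G VEve S Sigma.fst fun s => s.2.1 :=
    { isMorphism := fun _ _ _ he => he.1
      eveWins := fun s => s.2.2.prop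
      subset_wordDeriv := fun _ _ _ he => he.2
      exists_edge := fun s c v' he hwin' => by
        obtain ⟨Q, hQ, hmin⟩ := exists_minimal_le_of_wellFoundedLT (winning v')
          ⟨wordDeriv s.2.1 c, wordDeriv_mem_res c s.2.1.2⟩ hwin'
        exact ⟨⟨v', Q, hmin⟩, rfl, he, hQ⟩ }
  obtain ⟨Q₀, hQ₀, hmin₀⟩ :=
    exists_minimal_le_of_wellFoundedLT (winning v₀) ⟨W, self_mem_res W⟩ hwin
  refine ⟨_, S, Sigma.fst, ⟨v₀, Q₀, hmin₀⟩, labelling.isStrategy _, fun v => ?_,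
    labelling.vertexSat hW hQ₀⟩
  refine lt_of_le_of_lt ?_ (hwidth _ (setOfPred_minimal_antichain (winning v)))
  refine Cardinal.mk_le_of_surjective (f := fun Q => ⟨⟨v, Q⟩, rfl⟩) ?_
  rintro ⟨⟨_, Q⟩, rfl⟩
  exact ⟨Q, rfl⟩

theorem TopologicallyClosed.objEpsMemLT_of_chain_coloring (hW : TopologicallyClosed W)
    {M : Type u} (hM : #M < μ) (color : Res W → M)
    (hcolor : ∀ m, IsChain (· ≤ ·) (color ⁻¹' {m})) : ObjEpsMemLT W μ := by
  intro V G _ VEve v₀ hwin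
  let candidates (p : V × M) : Set (Res W) :=
    {Q | color Q = p.2 ∧ EveWins G VEve p.1 (epsObjective (Q : Set (ℕ → C)))}
  let D : Set (V × M) := {p | (candidates p).Nonempty}
  have exists_least (s : D) : ∃ Q, IsLeast (candidates s) Q :=
    exists_isLeast_of_isChain ((hcolor s.1.2).mono fun _ hQ => hQ.1) s.2
  choose best hbest using exists_least
  let S : Pregraph (Option C) D := ⟨fun s c s' => G.Edge s.1.1 c s'.1.1 ∧
    (best s' : Set (ℕ → C)) ⊆ leftQuot c.toList (best s) ∧ (c = none → s.1.2 = s'.1.2)⟩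
  have labelling : IsWinningLabelling G VEve S (fun s => s.1.1) fun s => epsObjective (best s) :=
    { isMorphism := fun _ _ _ he => he.1
      eveWins := fun s => (hbest s).1.2
      subset_wordDeriv := fun s c s' he =>
        wordDeriv_epsObjective (best s : Set (ℕ → C)) c ▸ epsObjective_mono he.2.1
      exists_edge := fun s c v' he hwin' => by
        rw [wordDeriv_epsObjective] at hwin'
        let Q : Res W := ⟨leftQuot c.toList (best s), leftQuot_mem_res _ (best s).2⟩
        let s' : D := ⟨(v', color Q), Q, rfl, hwin'⟩
        refine ⟨s', rfl, he, (hbest s').2 ⟨rfl, hwin'⟩, ?_⟩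
        rintro rfl
        have hQ : Q = best s := Subtype.ext (leftQuot_nil _)
        exact (hbest s).1.1.symm.trans (congrArg color hQ.symm) }
  let W' : Res W := ⟨W, self_mem_res W⟩
  let s₀ : D := ⟨(v₀, color W'), W', rfl, hwin⟩
  exact ⟨M, D, S, s₀, hM, ⟨labelling.isStrategy s₀, fun s s' he => he.2.2 rfl⟩,
    labelling.vertexSat hW.epsObjective (epsObjective_mono ((hbest s₀).2 ⟨rfl, hwin⟩))⟩

theorem TopologicallyClosed.objEpsMemLT (hW : TopologicallyClosed W)
    (hwidth : ∀ S : Set (Res W), IsAntichain (· ≤ ·) S → #S < μ) (hμ : μ < ℵ₀) :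
    ObjEpsMemLT W μ := by
  obtain ⟨m, rfl⟩ := Cardinal.lt_aleph0.1 hμ
  have card_lt (A : Finset (Res W)) (hA : IsAntichain (· ≤ ·) (A : Set (Res W))) : A.card < m := by
    exact_mod_cast Cardinal.mk_coe_finset.symm.trans_lt (hwidth A hA)
  obtain ⟨n, rfl⟩ : ∃ n, m = n + 1 :=
    Nat.exists_eq_add_one.2 (card_lt ∅ (by simp))
  obtain ⟨color, hcolor⟩ := exists_chain_coloring n fun A hA => Nat.lt_succ_iff.1 (card_lt A hA)
  refine hW.objEpsMemLT_of_chain_coloring (M := ULift.{u} (Fin n)) ?_ (fun Q => ⟨color Q⟩) ?_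
  · simp
  · exact fun i => (hcolor i.down).mono fun Q hQ => congrArg ULift.down hQ

end Memory

/-- A topologically closed objective whose left quotients form a
well-founded order of width < μ has ε-free memory < μ; if moreover μ is finite, it has
ε-memory < μ. -/
theorem closed_objective_memory
    {C : Type u} (W : Set (ℕ → C)) (μ : Cardinal.{u})
    (hclosed : TopologicallyClosed W)
    (hwf : WellFounded (fun A B : ↥(Res W) => (A : Set (ℕ → C)) ⊂ (B : Set (ℕ → C))))
    (hwidth : ∀ S : Set ↥(Res W),
      IsAntichain (fun A B : ↥(Res W) => (A : Set (ℕ → C)) ⊆ (B : Set (ℕ → C))) S →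
      #(↥S) < μ) :
    ObjMemLT W μ ∧ (μ < ℵ₀ → ObjEpsMemLT W μ) := by
  have : WellFoundedLT (Res W) := ⟨hwf⟩
  exact ⟨hclosed.objMemLT hwidth, hclosed.objEpsMemLT hwidth⟩
end

section
/- Let 𝔽 be a Muller objective over a finite set of colours C and let κ be a cardinal. Then there exists a well-monotone C-graph of width ≤ mem(𝔽) which is (κ, Muller(𝔽))-universal for prefix-independent objectives, i.e., it satisfies Muller(𝔽) and every C-pretree of cardinality < κ satisfying Muller(𝔽) admits a morphism into it. -/
universe u v

open Cardinal

namespace Pregraph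

variable {C V : Type u}

/-- Reachability by a finite path. -/
def Reachable (G : Pregraph C V) (t v : V) : Prop :=
  ∃ p, G.ListPath t p ∧ pathEnd t p = v

/-- Restriction of a pregraph to a set of vertices. -/
def restrict (G : Pregraph C V) (A : Set V) : Pregraph C ↥A :=
  ⟨fun a c a' => G.Edge a c a'⟩

end Pregraph

/-- `(κ, W)`-universality for prefix-independent objectives: the graph satisfies `W`
and embeds all pretrees of cardinality < κ satisfying `W`. -/
def IsUniversalPI {C VU : Type u} (κ : Cardinal.{u}) (W : Set (ℕ → C))
    (U : Pregraph C VU) : Prop :=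
  U.Sat W ∧
  ∀ (VT : Type u) (T : Pregraph C VT) (t₀ : VT), T.IsPretree t₀ → #VT < κ → T.Sat W →
    ∃ φ : VT → VU, T.IsMorphism U φ

/-- Almost `(κ, W)`-universality: the graph satisfies `W` and every pretree of
cardinality < κ satisfying `W` has a vertex whose reachable part embeds. -/
def IsAlmostUniversal {C VU : Type u} (κ : Cardinal.{u}) (W : Set (ℕ → C))
    (U : Pregraph C VU) : Prop :=
  U.Sat W ∧
  ∀ (VT : Type u) (T : Pregraph C VT) (t₀ : VT), T.IsPretree t₀ → #VT < κ → T.Sat W →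
    ∃ (t : VT) (φ : ↥{v | T.Reachable t v} → VU),
      (T.restrict {v | T.Reachable t v}).IsMorphism U φ

/-- The graph `U ⋉ ι`: vertices `VU × ι`, with `c`-edges `(v, λ) →c (v', λ')` whenever
`λ' < λ`, or `λ = λ'` and `v →c v'`. -/
def ltimesGraph {C VU : Type u} (U : Pregraph C VU) (ι : Type u) [LinearOrder ι] :
    Pregraph C (VU × ι) :=
  ⟨fun p c q => q.2 < p.2 ∨ (p.2 = q.2 ∧ U.Edge p.1 c q.1)⟩

/-- The set of colours occurring infinitely often in `w`. -/
noncomputable def infOcc {C : Type u} [Fintype C] (w : ℕ → C) : Finset C := by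
  classical exact Finset.univ.filter (fun c => ∀ N, ∃ n, N ≤ n ∧ w n = c)

/-- The Muller objective associated with a family `F` of (nonempty) subsets of `C`. -/
def MullerObj {C : Type u} [Fintype C] (F : Finset (Finset C)) : Set (ℕ → C) :=
  {w | infOcc w ∈ F}

/-- The supports of the children of the Muller objective `F` restricted to `D`:
the maximal nonempty subsets `D' ⊆ D` with `D' ∉ F` (if `D ∈ F`, positive case),
resp. `D' ∈ F` (if `D ∉ F`, negative case). -/
noncomputable def childSupports {C : Type u} [Fintype C] [DecidableEq C]
    (D : Finset C) (F : Finset (Finset C)) : Finset (Finset C) :=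
  if D ∈ F then
    D.powerset.filter (fun D' => D'.Nonempty ∧ D' ∉ F ∧
      ∀ D'' ∈ D.powerset, D''.Nonempty → D'' ∉ F → D' ⊆ D'' → D' = D'')
  else
    D.powerset.filter (fun D' => D'.Nonempty ∧ D' ∈ F ∧
      ∀ D'' ∈ D.powerset, D''.Nonempty → D'' ∈ F → D' ⊆ D'' → D' = D'')

lemma childSupports_ssubset {C : Type u} [Fintype C] [DecidableEq C]
    {D D' : Finset C} {F : Finset (Finset C)}
    (h : D' ∈ childSupports D F) : D' ⊂ D := by
  classical
  unfold childSupports at h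
  by_cases hD : D ∈ F
  · rw [if_pos hD, Finset.mem_filter, Finset.mem_powerset] at h
    exact lt_of_le_of_ne h.1 (by rintro rfl; exact h.2.2.1 hD)
  · rw [if_neg hD, Finset.mem_filter, Finset.mem_powerset] at h
    exact lt_of_le_of_ne h.1 (by rintro rfl; exact hD h.2.2.1)

/-- The memory `mem(F)` of a Muller objective, computed recursively on the Zielonka
tree: 1 for basic objectives, sums over children for positive objectives, maxima over
children for negative ones. -/
noncomputable def memMuller {C : Type u} [Fintype C] [DecidableEq C]
    (D : Finset C) (F : Finset (Finset C)) : ℕ :=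
  if childSupports D F = ∅ then 1
  else if D ∈ F then
    ∑ D' ∈ (childSupports D F).attach, memMuller D'.1 (F.filter (· ⊆ D'.1))
  else
    (childSupports D F).attach.sup (fun D' => memMuller D'.1 (F.filter (· ⊆ D'.1)))
termination_by D.card
decreasing_by
  all_goals exact Finset.card_lt_card (childSupports_ssubset D'.2)

/-!
By induction on the Zielonka tree, with colours restricted to a set `D`, one builds a graph that is
universal for the `D`-coloured pretrees satisfying the objective `W`.

If `D ∈ F`, put the graphs of the children side by side, and when a colour outside the current child
is read, jump to the next child in a cyclic order. The colours recurring on a path violating `W` all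
lie in one child, where the path would be trapped as soon as it sees only these colours; so from
some point on it stays in one component, which is impossible. Widths add up, and the component of a
vertex of a pretree is determined by the word leading to it.

If `D ∉ F`, stack the graphs of the children linearly, and stack `κ` copies of the result, allowing
every edge that goes strictly down. In a pretree satisfying `W`, from a vertex seeing as few colours
as possible there starts a path along which all these colours recur, so they lie in a single child
and the part reachable from that vertex maps into one graph. Removing such parts transfinitely often
exhausts the pretree, and the stage of removal tells to which copy a vertex is sent.
-/

open Filter

section Words

variable {C : Type u}

lemma PrefixIndependent.shift_mem_iff {W : Set (ℕ → C)} (hW : PrefixIndependent W) (w : ℕ → C)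
    (N : ℕ) : (fun n => w (N + n)) ∈ W ↔ w ∈ W := by
  have hw : listAppend (List.ofFn fun i : Fin N => w i) (fun n => w (N + n)) = w := by
    funext n
    by_cases hn : n < N
    · simp [listAppend, hn]
    · simp [listAppend, hn, Nat.add_sub_cancel' (not_lt.1 hn)]
  rw [← hW (List.ofFn fun i : Fin N => w i), hw]

variable [Fintype C]

lemma mem_infOcc_iff_frequently {w : ℕ → C} {c : C} :
    c ∈ infOcc w ↔ ∃ᶠ n in atTop, w n = c := by
  simp [infOcc, frequently_atTop]

lemma eventually_mem_infOcc (w : ℕ → C) : ∀ᶠ n in atTop, w n ∈ infOcc w := by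
  have h : ∀ c, ∀ᶠ n in atTop, w n = c → c ∈ infOcc w := by
    intro c
    by_cases hc : c ∈ infOcc w
    · exact .of_forall fun _ _ => hc
    · exact (not_frequently.1 (mt mem_infOcc_iff_frequently.2 hc)).mono fun _ hn h => absurd h hn
  exact (eventually_all.2 h).mono fun n hn => hn _ rfl

lemma infOcc_nonempty (w : ℕ → C) : (infOcc w).Nonempty :=
  let ⟨n, hn⟩ := (eventually_mem_infOcc w).exists
  ⟨w n, hn⟩

lemma coe_infOcc_subset {w : ℕ → C} {D : Set C} (h : ∀ n, w n ∈ D) : ↑(infOcc w) ⊆ D := by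
  intro c hc
  obtain ⟨n, rfl⟩ := (mem_infOcc_iff_frequently.1 hc).exists
  exact h n

lemma infOcc_listAppend (u : List C) (w : ℕ → C) : infOcc (listAppend u w) = infOcc w := by
  ext c
  rw [mem_infOcc_iff_frequently, mem_infOcc_iff_frequently, ← map_add_atTop_eq_nat u.length,
    frequently_map, map_add_atTop_eq_nat]
  simp [listAppend]

lemma prefixIndependent_mullerObj (F : Finset (Finset C)) : PrefixIndependent (MullerObj F) := by
  intro u w
  change infOcc (listAppend u w) ∈ F ↔ infOcc w ∈ F
  rw [infOcc_listAppend]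

end Words

lemma exists_seq_forall_frequently_eq {α : Type*} {E : Set α} (hE : E.Countable)
    (hne : E.Nonempty) : ∃ f : ℕ → α, (∀ n, f n ∈ E) ∧ ∀ a ∈ E, ∃ᶠ n in atTop, f n = a := by
  obtain ⟨g, rfl⟩ := hE.exists_eq_range hne
  refine ⟨fun n => g n.unpair.2, fun n => ⟨_, rfl⟩, ?_⟩
  rintro _ ⟨k, rfl⟩
  exact frequently_atTop.2 fun N => ⟨Nat.pair N k, Nat.left_le_pair N k, by simp⟩

lemma exists_increment_of_decreasing_rank {k r : ℕ → ℕ} (hk : k 0 = 0)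
    (hstep : ∀ i, k (i + 1) = k i + 1 ∨ k (i + 1) = k i ∧ r (i + 1) < r i) (n : ℕ) :
    ∃ i ≥ n, k i = n ∧ k (i + 1) = n + 1 := by
  have hle : ∀ i, k i ≤ i := by
    intro i
    induction i with
    | zero => exact hk.le
    | succ i ih => have := hstep i; omega
  have hnext : ∀ m i, r i = m → ∃ j, k j = k i ∧ k (j + 1) = k i + 1 := by
    intro m
    induction m using Nat.strong_induction_on with
    | _ m ih =>
      rintro i rfl
      rcases hstep i with h | ⟨h, hr⟩
      · exact ⟨i, rfl, h⟩
      · simpa only [h] using ih _ hr (i + 1) rfl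
  obtain ⟨i, hi⟩ : ∃ i, k i = n := by
    induction n with
    | zero => exact ⟨0, hk⟩
    | succ n ih =>
      obtain ⟨i, rfl⟩ := ih
      obtain ⟨j, -, hj⟩ := hnext _ i rfl
      exact ⟨j + 1, hj⟩
  obtain ⟨j, hj, hj'⟩ := hnext _ i rfl
  rw [hi] at hj hj'
  exact ⟨j, hj ▸ hle j, hj, hj'⟩

lemma exists_rank_lt_of_isCycleOn {J : Type*} [Finite J] {σ : Equiv.Perm J}
    (hσ : σ.IsCycleOn Set.univ) (j : J) : ∃ μ : J → ℕ, ∀ i ≠ j, μ (σ i) < μ i := by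
  classical
  have hreach : ∀ i, ∃ n : ℕ, (σ ^ n) i = j := fun i =>
    hσ.exists_pow_eq' Set.finite_univ (Set.mem_univ i) (Set.mem_univ j)
  refine ⟨fun i => Nat.find (hreach i), fun i hij => ?_⟩
  have hspec := Nat.find_spec (hreach i)
  rcases hn : Nat.find (hreach i) with _ | n
  · rw [hn] at hspec
    exact absurd hspec hij
  · rw [hn, pow_succ, Equiv.Perm.mul_apply] at hspec
    calc Nat.find (hreach (σ i)) ≤ n := Nat.find_min' _ hspec
      _ < Nat.find (hreach i) := hn ▸ Nat.lt_succ_self n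

lemma sum_natCast_eq_cast_sum {J : Type u} [Fintype J] (m : J → ℕ) :
    Cardinal.sum (fun j => (m j : Cardinal.{u})) = ((∑ j, m j : ℕ) : Cardinal.{u}) := by
  have h (j : J) : (m j : Cardinal.{u}) = #(ULift.{u} (Fin (m j))) := by simp
  calc Cardinal.sum (fun j => (m j : Cardinal.{u})) = #(Σ j, ULift.{u} (Fin (m j))) := by
        rw [mk_sigma]
        exact congrArg _ (funext h)
    _ = ((∑ j, m j : ℕ) : Cardinal.{u}) := by simp

/-- `ℓ` is the stage of removal in the transfinite process removing `g X` once `X` is removed. -/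
lemma exists_layering {α ι : Type u} [LinearOrder ι] [WellFoundedLT ι] (hι : #α < #ι)
    (g : Set α → Set α) (hg : ∀ X, Disjoint (g X) X) (hne : ∀ X, X ≠ Set.univ → (g X).Nonempty) :
    ∃ ℓ : α → ι, ∀ a, {b | ℓ b = ℓ a} = g {b | ℓ b < ℓ a} := by
  let A : ι → Set α := WellFoundedLT.fix fun i ih => g {b | ∃ j, ∃ h : j < i, b ∈ ih j h}
  have hA (i : ι) : A i = g {b | ∃ j, j < i ∧ b ∈ A j} := by
    simpa only [exists_prop] using
      WellFoundedLT.fix_eq (fun i ih => g {b | ∃ j, ∃ h : j < i, b ∈ ih j h}) i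
  have hdisj {i j : ι} {a : α} (hi : a ∈ A i) (hj : a ∈ A j) : ¬ i < j := by
    intro hij
    rw [hA] at hj
    exact Set.disjoint_left.1 (hg _) hj ⟨i, hij, hi⟩
  have huniq {i j : ι} {a : α} (hi : a ∈ A i) (hj : a ∈ A j) : i = j :=
    le_antisymm (not_lt.1 (hdisj hj hi)) (not_lt.1 (hdisj hi hj))
  have hcover : ∀ a, ∃ i, a ∈ A i := by
    by_contra! hcontra
    obtain ⟨a, ha⟩ := hcontra
    have hnonempty (i : ι) : (A i).Nonempty := by
      rw [hA]
      refine hne _ ((Set.ne_univ_iff_exists_notMem _).2 ⟨a, ?_⟩)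
      rintro ⟨j, -, hj⟩
      exact ha j hj
    choose t ht using hnonempty
    have ht_inj : Function.Injective t := fun i j h => huniq (ht i) (h ▸ ht j)
    exact hι.not_ge (mk_le_of_injective ht_inj)
  choose ℓ hℓ using hcover
  have hmem {a : α} {i : ι} : a ∈ A i ↔ ℓ a = i :=
    ⟨huniq (hℓ a), by rintro rfl; exact hℓ a⟩
  refine ⟨ℓ, fun a => ?_⟩
  simpa [hmem, Set.ext_iff] using hA (ℓ a)

namespace Pregraph

variable {C V : Type u} {G : Pregraph C V}

lemma sat_iff {W : Set (ℕ → C)} : G.Sat W ↔ ∀ π γ, G.InfPath π γ → γ ∈ W :=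
  ⟨fun h π γ hπ => h (π 0) π γ rfl hπ, fun h _ π γ _ hπ => h π γ hπ⟩

lemma InfPath.shift {π : ℕ → V} {γ : ℕ → C} (hπ : G.InfPath π γ) (N : ℕ) :
    G.InfPath (fun n => π (N + n)) (fun n => γ (N + n)) :=
  fun n => hπ (N + n)

lemma ListPath.concat {c : C} {w : V} : ∀ {p : List (C × V)} {v : V}, G.ListPath v p →
    G.Edge (pathEnd v p) c w →
      G.ListPath v (p ++ [(c, w)]) ∧ pathEnd v (p ++ [(c, w)]) = w
  | [], _, _, h => ⟨⟨h, trivial⟩, rfl⟩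
  | _ :: _, _, hp, h => ⟨⟨hp.1, (hp.2.concat h).1⟩, (hp.2.concat h).2⟩

lemma ListPath.pathEnd_mem {S : Set V} (hS : ∀ ⦃v c w⦄, v ∈ S → G.Edge v c w → w ∈ S) :
    ∀ {p : List (C × V)} {v : V}, G.ListPath v p → v ∈ S → pathEnd v p ∈ S
  | [], _, _, hv => hv
  | _ :: _, _, hp, hv => hp.2.pathEnd_mem hS (hS hv hp.1)

lemma Reachable.refl (v : V) : G.Reachable v v := ⟨[], trivial, rfl⟩

lemma Reachable.tail {u v w : V} {c : C} (huv : G.Reachable u v) (h : G.Edge v c w) :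
    G.Reachable u w := by
  obtain ⟨p, hp, rfl⟩ := huv
  exact ⟨p ++ [(c, w)], hp.concat h⟩

lemma Reachable.mem_of_closed {S : Set V} (hS : ∀ ⦃v c w⦄, v ∈ S → G.Edge v c w → w ∈ S)
    {u v : V} (huv : G.Reachable u v) (hu : u ∈ S) : v ∈ S := by
  obtain ⟨p, hp, rfl⟩ := huv
  exact hp.pathEnd_mem hS hu

lemma Reachable.trans {u v w : V} (huv : G.Reachable u v) (hvw : G.Reachable v w) :
    G.Reachable u w :=
  hvw.mem_of_closed (S := {x | G.Reachable u x}) (fun _ _ _ hx h => hx.tail h) huv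

lemma InfPath.reachable {π : ℕ → V} {γ : ℕ → C} (hπ : G.InfPath π γ) (n : ℕ) :
    G.Reachable (π 0) (π n) := by
  induction n with
  | zero => exact .refl _
  | succ n ih => exact ih.tail (hπ n)

/-- The colours of the edges reachable from `v`. -/
def colorsFrom (G : Pregraph C V) (v : V) : Set C :=
  {c | ∃ u w, G.Reachable v u ∧ G.Edge u c w}

lemma colorsFrom_subset_of_reachable {u v : V} (huv : G.Reachable u v) :
    G.colorsFrom v ⊆ G.colorsFrom u :=
  fun _ ⟨x, y, hx, h⟩ => ⟨x, y, huv.trans hx, h⟩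

lemma exists_reachable_forall_colorsFrom_eq [Finite C] (G : Pregraph C V) (v : V) :
    ∃ t, G.Reachable v t ∧ ∀ s, G.Reachable t s → G.colorsFrom s = G.colorsFrom t := by
  obtain ⟨_, ⟨t, ht, rfl⟩, hmin⟩ := WellFounded.has_min (wellFounded_lt (α := Set C))
    (G.colorsFrom '' {t | G.Reachable v t}) ⟨_, v, .refl v, rfl⟩
  refine ⟨t, ht, fun s hs => ?_⟩
  exact (colorsFrom_subset_of_reachable hs).eq_of_not_ssubset (hmin _ ⟨s, ht.trans hs, rfl⟩)

lemma exists_rank_of_mem_colorsFrom (G : Pregraph C V) (c : C) :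
    ∃ r : V → ℕ, ∀ v, c ∈ G.colorsFrom v →
      (∃ w, G.Edge v c w) ∨ ∃ d w, G.Edge v d w ∧ r w < r v := by
  let lengths (v : V) : Set ℕ :=
    {n | ∃ p, G.ListPath v p ∧ p.length = n ∧ ∃ w, G.Edge (pathEnd v p) c w}
  refine ⟨fun v => sInf (lengths v), ?_⟩
  rintro v ⟨_, w, ⟨q, hq, rfl⟩, hw⟩
  obtain ⟨p, hp, hlen, hlast⟩ := Nat.sInf_mem (s := lengths v) ⟨_, q, hq, rfl, w, hw⟩
  cases p with
  | nil => exact .inl hlast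
  | cons e p =>
    refine .inr ⟨e.1, e.2, hp.1, ?_⟩
    calc sInf (lengths e.2) ≤ p.length := Nat.sInf_le ⟨p, hp.2, rfl, hlast⟩
      _ < sInf (lengths v) := by rw [← hlen]; exact Nat.lt_succ_self _

/-- The path pursues the colours of `E` one after the other, along a sequence in which each of them
occurs infinitely often; `r c` bounds the time needed to see `c`. -/
lemma exists_infPath_forall_frequently {S : Set V} {E : Set C} (hE : E.Countable)
    (hne : E.Nonempty) {r : C → V → ℕ}
    (hstep : ∀ v ∈ S, ∀ c ∈ E,
      (∃ w ∈ S, G.Edge v c w) ∨ ∃ d, ∃ w ∈ S, G.Edge v d w ∧ r c w < r c v)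
    {t : V} (ht : t ∈ S) :
    ∃ π γ, π 0 = t ∧ G.InfPath π γ ∧ ∀ c ∈ E, ∃ᶠ n in atTop, γ n = c := by
  obtain ⟨f, hfE, hf⟩ := exists_seq_forall_frequently_eq hE hne
  have hmove : ∀ s : S × ℕ, ∃ (c : C) (s' : S × ℕ), G.Edge s.1 c s'.1 ∧
      (s'.2 = s.2 + 1 ∧ c = f s.2 ∨ s'.2 = s.2 ∧ r (f s.2) s'.1 < r (f s.2) s.1) := by
    rintro ⟨⟨v, hv⟩, n⟩
    rcases hstep v hv (f n) (hfE n) with ⟨w, hw, h⟩ | ⟨d, w, hw, h, hlt⟩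
    · exact ⟨f n, ⟨⟨w, hw⟩, n + 1⟩, h, .inl ⟨rfl, rfl⟩⟩
    · exact ⟨d, ⟨⟨w, hw⟩, n⟩, h, .inr ⟨rfl, hlt⟩⟩
  choose color next hedge hprogress using hmove
  let s (i : ℕ) : S × ℕ := next^[i] (⟨t, ht⟩, 0)
  have hs (i : ℕ) : s (i + 1) = next (s i) := Function.iterate_succ_apply' next i _
  refine ⟨fun i => (s i).1, fun i => color (s i), rfl, fun i => ?_, fun c hc => ?_⟩
  · simpa only [hs] using hedge (s i)
  have hcount (i : ℕ) : (s (i + 1)).2 = (s i).2 + 1 ∨ (s (i + 1)).2 = (s i).2 ∧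
      r (f (s (i + 1)).2) (s (i + 1)).1 < r (f (s i).2) (s i).1 := by
    rw [hs]
    rcases hprogress (s i) with ⟨h, -⟩ | ⟨h, hlt⟩
    · exact .inl h
    · exact .inr ⟨h, by rwa [h]⟩
  refine frequently_atTop.2 fun N => ?_
  obtain ⟨n, hn, rfl⟩ := frequently_atTop.1 (hf c hc) N
  obtain ⟨i, hi, hin, hin'⟩ := exists_increment_of_decreasing_rank
    (k := fun i => (s i).2) (r := fun i => r (f (s i).2) (s i).1) rfl hcount n
  refine ⟨i, hn.trans hi, ?_⟩
  rcases hprogress (s i) with ⟨-, h⟩ | ⟨h, -⟩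
  · exact h.trans (congrArg f hin)
  · rw [hs, h, hin] at hin'
    omega

lemma exists_reachable_infOcc_eq_colorsFrom [Fintype C] {W : Set (ℕ → C)} (hG : G.Sat W) (v : V) :
    ∃ t, G.Reachable v t ∧
      (G.colorsFrom t = ∅ ∨ ∃ γ ∈ W, (infOcc γ : Set C) = G.colorsFrom t) := by
  obtain ⟨t, ht, hconst⟩ := G.exists_reachable_forall_colorsFrom_eq v
  refine ⟨t, ht, (G.colorsFrom t).eq_empty_or_nonempty.imp_right fun hne => ?_⟩
  choose r hr using G.exists_rank_of_mem_colorsFrom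
  have hstep : ∀ u ∈ {u | G.Reachable t u}, ∀ c ∈ G.colorsFrom t,
      (∃ w ∈ {u | G.Reachable t u}, G.Edge u c w) ∨
        ∃ d, ∃ w ∈ {u | G.Reachable t u}, G.Edge u d w ∧ r c w < r c u := by
    intro u hu c hc
    rcases hr c u (hconst u hu ▸ hc) with ⟨w, h⟩ | ⟨d, w, h, hlt⟩
    · exact .inl ⟨w, hu.tail h, h⟩
    · exact .inr ⟨d, w, hu.tail h, h, hlt⟩
  obtain ⟨π, γ, rfl, hπ, hγ⟩ :=
    exists_infPath_forall_frequently (Set.to_countable _) hne hstep (Reachable.refl t)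
  refine ⟨γ, sat_iff.1 hG π γ hπ, Set.Subset.antisymm ?_ ?_⟩
  · exact coe_infOcc_subset fun n => ⟨_, _, hπ.reachable n, hπ n⟩
  · exact fun c hc => Finset.mem_coe.2 (mem_infOcc_iff_frequently.2 (hγ c hc))

/-- A history pregraph: its colours lie in `D`, it satisfies `W`, and each vertex carries a word,
extended along every edge by the colour of that edge. Such pregraphs replace pretrees here because,
unlike pretrees, they are stable under deleting edges. -/
structure IsHistoryGraph (T : Pregraph C V) (D : Set C) (W : Set (ℕ → C)) : Prop where
  exists_history : ∃ p : V → List C, ∀ ⦃v c w⦄, T.Edge v c w → p w = p v ++ [c]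
  mem_colors : ∀ ⦃v c w⦄, T.Edge v c w → c ∈ D
  sat : T.Sat W

lemma IsHistoryGraph.of_le {T T' : Pregraph C V} {D D' : Set C} {W : Set (ℕ → C)}
    (hT : T.IsHistoryGraph D W) (hle : ∀ ⦃v c w⦄, T'.Edge v c w → T.Edge v c w)
    (hD' : ∀ ⦃v c w⦄, T'.Edge v c w → c ∈ D') : T'.IsHistoryGraph D' W where
  exists_history := hT.exists_history.imp fun _ hp _ _ _ h => hp (hle h)
  mem_colors := hD'
  sat := sat_iff.2 fun π γ hπ => sat_iff.1 hT.sat π γ fun n => hle (hπ n)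

lemma IsPretree.exists_history {t₀ : V} (h : G.IsPretree t₀) :
    ∃ p : V → List C, ∀ ⦃v c w⦄, G.Edge v c w → p w = p v ++ [c] := by
  choose q hq huniq using h
  refine ⟨fun v => (q v).map Prod.fst, fun v c w hvw => ?_⟩
  have hqw : q v ++ [(c, w)] = q w :=
    huniq w _ ((hq v).1.concat ((hq v).2.symm ▸ hvw))
  simp only [← hqw, List.map_append, List.map_cons, List.map_nil]

/-- Universality relative to a set `D` of colours: `U` has colours in `D`, satisfies `W`, and
receives a morphism from every history pregraph of cardinality `< κ` with these two properties. -/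
structure IsUniversalOn (κ : Cardinal.{u}) (D : Set C) (W : Set (ℕ → C)) (U : Pregraph C V) :
    Prop where
  mem_colors : ∀ ⦃v c w⦄, U.Edge v c w → c ∈ D
  sat : U.Sat W
  exists_morphism : ∀ ⦃VT : Type u⦄ (T : Pregraph C VT), #VT < κ → T.IsHistoryGraph D W →
    ∃ φ : VT → V, T.IsMorphism U φ

lemma IsUniversalOn.congr {κ : Cardinal.{u}} {D : Set C} {W W' : Set (ℕ → C)} {U : Pregraph C V}
    (hU : U.IsUniversalOn κ D W) (hWW' : ∀ γ : ℕ → C, (∀ n, γ n ∈ D) → (γ ∈ W ↔ γ ∈ W')) :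
    U.IsUniversalOn κ D W' where
  mem_colors := hU.mem_colors
  sat := sat_iff.2 fun π γ hπ =>
    (hWW' γ fun n => hU.mem_colors (hπ n)).1 (sat_iff.1 hU.sat π γ hπ)
  exists_morphism _ T hκ hT := hU.exists_morphism T hκ
    { hT with
      sat := sat_iff.2 fun π γ hπ =>
        (hWW' γ fun n => hT.mem_colors (hπ n)).2 (sat_iff.1 hT.sat π γ hπ) }

/-- Almost universality relative to a set `D` of colours: in a history pregraph, every vertex
reaches some `t` such that the part of the pregraph reachable from `t` maps into `U`. -/
structure IsAlmostUniversalOn (κ : Cardinal.{u}) (D : Set C) (W : Set (ℕ → C))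
    (U : Pregraph C V) : Prop where
  mem_colors : ∀ ⦃v c w⦄, U.Edge v c w → c ∈ D
  sat : U.Sat W
  exists_morphism_from : ∀ ⦃VT : Type u⦄ (T : Pregraph C VT), #VT < κ → T.IsHistoryGraph D W →
    ∀ v₀, ∃ t, T.Reachable v₀ t ∧ ∃ φ : VT → V,
      ∀ ⦃v c w⦄, T.Reachable t v → T.Edge v c w → U.Edge (φ v) c (φ w)

/-- Well-monotonicity together with the bound `m` on the width. -/
structure IsWellMonotone [PartialOrder V] (U : Pregraph C V) (m : Cardinal.{u}) : Prop where
  wellFoundedLT : WellFoundedLT V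
  monotone : U.MonotoneRel (· ≤ ·)
  width : ∀ A : Set V, IsAntichain (· ≤ ·) A → #A ≤ m

lemma IsWellMonotone.wellFounded_strictOf [PartialOrder V] {U : Pregraph C V} {m : Cardinal.{u}}
    (hU : U.IsWellMonotone m) : WellFounded (strictOf ((· ≤ ·) : V → V → Prop)) :=
  Subrelation.wf (fun h => lt_of_le_of_ne h.1 h.2) hU.wellFoundedLT.wf

lemma IsWellMonotone.mono [PartialOrder V] {U : Pregraph C V} {m m' : Cardinal.{u}}
    (hU : U.IsWellMonotone m) (hm : m ≤ m') : U.IsWellMonotone m' :=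
  { hU with width := fun A hA => (hU.width A hA).trans hm }

/-- The one-vertex graph with a loop of each colour of `D`. -/
def loops (D : Set C) : Pregraph C PUnit.{u + 1} :=
  ⟨fun _ c _ => c ∈ D⟩

lemma isWellMonotone_loops (D : Set C) : (loops D).IsWellMonotone 1 where
  wellFoundedLT := inferInstance
  monotone _ _ _ _ _ _ h _ := h
  width _ _ := le_one_iff_subsingleton.2 inferInstance

lemma isUniversalOn_loops (κ : Cardinal.{u}) {D : Set C} {W : Set (ℕ → C)}
    (hW : ∀ γ : ℕ → C, (∀ n, γ n ∈ D) → γ ∈ W) : (loops D).IsUniversalOn κ D W where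
  mem_colors _ _ _ h := h
  sat := sat_iff.2 fun _ γ hπ => hW γ hπ
  exists_morphism _ _ _ hT := ⟨fun _ => PUnit.unit, fun _ _ _ h => hT.mem_colors h⟩

section JumpSum

variable {J : Type u} {F : J → Type u} {R : J → C → J → Prop} {U : ∀ j, Pregraph C (F j)}

/-- The edge relation of `jumpSum`: inside a component, or jumping as permitted by `R`. -/
inductive JumpSumEdge (R : J → C → J → Prop) (U : ∀ j, Pregraph C (F j)) :
    (Σ j, F j) → C → (Σ j, F j) → Prop
  | inside {j : J} {c : C} {v w : F j} : (U j).Edge v c w → JumpSumEdge R U ⟨j, v⟩ c ⟨j, w⟩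
  | jump {x y : Σ j, F j} {c : C} : R x.1 c y.1 → JumpSumEdge R U x c y

/-- The disjoint union of the pregraphs `U j`, with in addition all `c`-edges from `U i` to `U j`
for which `R i c j` holds. -/
def jumpSum (R : J → C → J → Prop) (U : ∀ j, Pregraph C (F j)) : Pregraph C (Σ j, F j) :=
  ⟨JumpSumEdge R U⟩

lemma mem_colors_of_jumpSum {D : Set C} (hU : ∀ j ⦃v c w⦄, (U j).Edge v c w → c ∈ D)
    (hR : ∀ i c j, R i c j → c ∈ D) ⦃x : Σ j, F j⦄ ⦃c : C⦄ ⦃y : Σ j, F j⦄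
    (h : (jumpSum R U).Edge x c y) : c ∈ D := by
  cases h with
  | inside h => exact hU _ h
  | jump h => exact hR _ _ _ h

lemma exists_infPath_of_forall_not_jump {π : ℕ → Σ j, F j} {γ : ℕ → C}
    (hπ : (jumpSum R U).InfPath π γ) (hR : ∀ n, ¬ R (π n).1 (γ n) (π (n + 1)).1) :
    ∃ j v, (U j).InfPath v γ := by
  have hinside (n : ℕ) : ∃ j v w, (U j).Edge v (γ n) w ∧ π n = ⟨j, v⟩ ∧ π (n + 1) = ⟨j, w⟩ := by
    have hn := hπ n
    have hRn := hR n
    revert hn hRn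
    generalize π n = x, π (n + 1) = y
    rintro (h | h) hRn
    · exact ⟨_, _, _, h, rfl, rfl⟩
    · exact absurd h hRn
  have hfibre (n : ℕ) : ∃ v, π n = ⟨(π 0).1, v⟩ := by
    induction n with
    | zero => exact ⟨(π 0).2, rfl⟩
    | succ n ih =>
      obtain ⟨u, hu⟩ := ih
      obtain ⟨j, v, w, -, hv, hw⟩ := hinside n
      obtain rfl : j = (π 0).1 := congrArg Sigma.fst (hv.symm.trans hu)
      exact ⟨w, hw⟩
  choose v hv using hfibre
  refine ⟨(π 0).1, v, fun n => ?_⟩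
  obtain ⟨j, x, y, h, hx, hy⟩ := hinside n
  rw [hv] at hx hy
  cases hx
  cases hy
  exact h

lemma mem_of_jumpSum_of_rank {W : Set (ℕ → C)} (hW : PrefixIndependent W) (hU : ∀ j, (U j).Sat W)
    {α : Type*} [PartialOrder α] [WellFoundedLT α] (ρ : J → α) {π : ℕ → Σ j, F j} {γ : ℕ → C}
    (hπ : (jumpSum R U).InfPath π γ)
    (hρ : ∀ᶠ n in atTop, R (π n).1 (γ n) (π (n + 1)).1 → ρ (π (n + 1)).1 < ρ (π n).1) :
    γ ∈ W := by
  obtain ⟨N, hN⟩ := eventually_atTop.1 hρ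
  have hanti : Antitone fun n => ρ (π (N + n)).1 := by
    refine antitone_nat_of_succ_le fun n => ?_
    have hedge := hπ (N + n)
    have hlt := hN (N + n) (Nat.le_add_right N n)
    revert hedge hlt
    rw [← Nat.add_assoc]
    generalize π (N + n) = x, π (N + n + 1) = y
    rintro (_ | h) hlt
    · exact le_rfl
    · exact (hlt h).le
  obtain ⟨M, hM⟩ := WellFoundedLT.antitone_chain_condition hanti
  have hno_jump (n : ℕ) :
      ¬ R (π (N + M + n)).1 (γ (N + M + n)) (π (N + M + (n + 1))).1 := by
    intro h
    have h₁ := hM (M + n) (by omega)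
    have h₂ := hM (M + (n + 1)) (by omega)
    have hlt := hN (N + M + n) (by omega) h
    simp only [← Nat.add_assoc] at h₁ h₂ hlt
    exact hlt.ne (h₂.symm.trans h₁)
  obtain ⟨j, v, hv⟩ := exists_infPath_of_forall_not_jump (hπ.shift (N + M)) hno_jump
  exact (hW.shift_mem_iff γ (N + M)).1 (sat_iff.1 (hU j) v _ hv)

lemma wellFoundedLT_sigma [∀ j, PartialOrder (F j)] (hF : ∀ j, WellFoundedLT (F j)) :
    WellFoundedLT (Σ j, F j) := by
  refine ⟨⟨fun ⟨j, v⟩ => ?_⟩⟩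
  induction v using (hF j).wf.induction with
  | _ v ih => exact ⟨_, fun _ ⟨_, w, _, hwv⟩ => ih w hwv⟩

lemma isWellMonotone_jumpSum [∀ j, PartialOrder (F j)] {m : J → Cardinal.{u}}
    (hU : ∀ j, (U j).IsWellMonotone (m j)) : (jumpSum R U).IsWellMonotone (Cardinal.sum m) where
  wellFoundedLT := wellFoundedLT_sigma fun j => (hU j).wellFoundedLT
  monotone := by
    rintro _ _ c _ _ ⟨j, v, u, hvu⟩ hedge ⟨k, u', v', hu'v'⟩
    cases hedge with
    | inside h => exact .inside ((hU j).monotone hvu h hu'v')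
    | jump h => exact .jump h
  width A hA := by
    have hA_subset : A ⊆ ⋃ j, Sigma.mk j '' (Sigma.mk j ⁻¹' A) := fun ⟨j, v⟩ hv =>
      Set.mem_iUnion.2 ⟨j, v, hv, rfl⟩
    have hfibre (j : J) : IsAntichain (· ≤ ·) (Sigma.mk j ⁻¹' A) := fun v hv w hw hne hle =>
      hA hv hw (fun h => hne (sigma_mk_injective h)) (.fiber j v w hle)
    calc #A ≤ #(⋃ j, Sigma.mk j '' (Sigma.mk j ⁻¹' A)) := mk_le_mk_of_subset hA_subset
      _ ≤ Cardinal.sum fun j => #(Sigma.mk j '' (Sigma.mk j ⁻¹' A)) := mk_iUnion_le_sum_mk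
      _ ≤ Cardinal.sum m :=
        sum_le_sum _ _ fun j => mk_image_le.trans ((hU j).width _ (hfibre j))

end JumpSum

section CyclicSum

variable {J : Type u} {F : J → Type u} {D : Set C} {E : J → Set C} {W : Set (ℕ → C)}
  {U : ∀ j, Pregraph C (F j)}

/-- The sum used at positive nodes of the Zielonka tree: from the component `i`, every colour of `D`
that is not in `E i` leads to an arbitrary vertex of the component `σ i`. -/
def cyclicSum (D : Set C) (E : J → Set C) (σ : Equiv.Perm J) (U : ∀ j, Pregraph C (F j)) :
    Pregraph C (Σ j, F j) :=
  jumpSum (fun i c j => c ∈ D ∧ c ∉ E i ∧ j = σ i) U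

lemma sat_cyclicSum [Fintype C] [Finite J] {σ : Equiv.Perm J} (hσ : σ.IsCycleOn Set.univ)
    (hW : PrefixIndependent W) (hcover : ∀ γ ∉ W, ↑(infOcc γ) ⊆ D → ∃ j, ↑(infOcc γ) ⊆ E j)
    (hUD : ∀ j ⦃v c w⦄, (U j).Edge v c w → c ∈ D) (hU : ∀ j, (U j).Sat W) :
    (cyclicSum D E σ U).Sat W := by
  refine sat_iff.2 fun π γ hπ => by_contra fun hγ => hγ ?_
  have hγD (n : ℕ) : γ n ∈ D := mem_colors_of_jumpSum hUD (fun _ _ _ h => h.1) (hπ n)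
  obtain ⟨j, hj⟩ := hcover γ hγ (coe_infOcc_subset hγD)
  obtain ⟨μ, hμ⟩ := exists_rank_lt_of_isCycleOn hσ j
  refine mem_of_jumpSum_of_rank hW hU μ hπ ((eventually_mem_infOcc γ).mono ?_)
  rintro n hn ⟨-, hnE, hnext⟩
  rw [hnext]
  exact hμ _ fun h => hnE (h ▸ hj hn)

lemma IsHistoryGraph.exists_isMorphism_cyclicSum [Nonempty J] {κ : Cardinal.{u}}
    (σ : Equiv.Perm J) (hU : ∀ j, (U j).IsUniversalOn κ (E j) W) {T : Pregraph C V} (hκ : #V < κ)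
    (hT : T.IsHistoryGraph D W) : ∃ φ : V → Σ j, F j, T.IsMorphism (cyclicSum D E σ U) φ := by
  classical
  obtain ⟨p, hp⟩ := hT.exists_history
  obtain ⟨ℓ, hℓ⟩ : ∃ ℓ : V → J, ∀ ⦃v c w⦄, T.Edge v c w →
      ℓ w = if c ∈ E (ℓ v) then ℓ v else σ (ℓ v) := by
    refine ⟨fun v => (p v).foldl (fun j c => if c ∈ E j then j else σ j) (Classical.arbitrary J),
      fun v c w h => ?_⟩
    simp only [hp h, List.foldl_concat]
  have hcomponent (j : J) : ∃ φ : V → F j, ∀ ⦃v c w⦄, T.Edge v c w → c ∈ E j →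
      (U j).Edge (φ v) c (φ w) := by
    obtain ⟨φ, hφ⟩ := (hU j).exists_morphism ⟨fun v c w => T.Edge v c w ∧ c ∈ E j⟩ hκ
      (hT.of_le (fun _ _ _ h => h.1) fun _ _ _ h => h.2)
    exact ⟨φ, fun _ _ _ h hc => hφ ⟨h, hc⟩⟩
  choose φ hφ using hcomponent
  refine ⟨fun v => ⟨ℓ v, φ (ℓ v) v⟩, fun v c w h => ?_⟩
  by_cases hc : c ∈ E (ℓ v)
  · beta_reduce
    rw [hℓ h, if_pos hc]
    exact .inside (hφ (ℓ v) h hc)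
  · exact .jump ⟨hT.mem_colors h, hc, (hℓ h).trans (if_neg hc)⟩

lemma isUniversalOn_cyclicSum [Fintype C] [Finite J] [Nonempty J] {κ : Cardinal.{u}}
    {σ : Equiv.Perm J} (hσ : σ.IsCycleOn Set.univ) (hW : PrefixIndependent W)
    (hE : ∀ j, E j ⊆ D) (hcover : ∀ γ ∉ W, ↑(infOcc γ) ⊆ D → ∃ j, ↑(infOcc γ) ⊆ E j)
    (hU : ∀ j, (U j).IsUniversalOn κ (E j) W) : (cyclicSum D E σ U).IsUniversalOn κ D W :=
  have hUD : ∀ j ⦃v c w⦄, (U j).Edge v c w → c ∈ D := fun j _ _ _ h => hE j ((hU j).mem_colors h)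
  { mem_colors := mem_colors_of_jumpSum hUD fun _ _ _ h => h.1
    sat := sat_cyclicSum hσ hW hcover hUD fun j => (hU j).sat
    exists_morphism := fun _ _ hκ hT => hT.exists_isMorphism_cyclicSum σ hU hκ }

end CyclicSum

section LexSum

variable {J : Type u} [LinearOrder J] {F : J → Type u} {D : Set C} {W : Set (ℕ → C)}
  {U : ∀ j, Pregraph C (F j)}

/-- The sum used at negative nodes of the Zielonka tree: from the component `i`, every colour of `D`
leads to all vertices of all components `j < i`. -/
def lexSum (D : Set C) (U : ∀ j, Pregraph C (F j)) : Pregraph C (Σₗ j, F j) :=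
  jumpSum (fun i c j => c ∈ D ∧ j < i) U

lemma mem_colors_of_lexSum (hU : ∀ j ⦃v c w⦄, (U j).Edge v c w → c ∈ D) ⦃x : Σₗ j, F j⦄ ⦃c : C⦄
    ⦃y : Σₗ j, F j⦄ (h : (lexSum D U).Edge x c y) : c ∈ D :=
  mem_colors_of_jumpSum hU (fun _ _ _ h => h.1) h

lemma sat_lexSum [WellFoundedLT J] (hW : PrefixIndependent W) (hU : ∀ j, (U j).Sat W) :
    (lexSum D U).Sat W :=
  sat_iff.2 fun _ _ hπ => mem_of_jumpSum_of_rank hW hU id hπ (.of_forall fun _ h => h.2)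

lemma wellFoundedLT_sigmaLex [WellFoundedLT J] [∀ j, PartialOrder (F j)]
    (hF : ∀ j, WellFoundedLT (F j)) : WellFoundedLT (Σₗ j, F j) := by
  refine ⟨⟨fun ⟨j, v⟩ => ?_⟩⟩
  induction j using WellFoundedLT.induction with
  | _ j ihj =>
    induction v using (hF j).wf.induction with
    | _ v ihv =>
      refine ⟨_, fun y hy => ?_⟩
      cases hy with
      | left w _ hij => exact ihj _ hij w
      | right w _ hwv => exact ihv w hwv

lemma mk_le_of_isAntichain_sigmaLex [∀ j, PartialOrder (F j)] {m : Cardinal.{u}}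
    (hF : ∀ j (A : Set (F j)), IsAntichain (· ≤ ·) A → #A ≤ m) {A : Set (Σₗ j, F j)}
    (hA : IsAntichain (· ≤ ·) A) : #A ≤ m := by
  rcases A.eq_empty_or_nonempty with rfl | ⟨⟨j, v⟩, hv⟩
  · simp
  have hnot_lt {x y : Σₗ j, F j} (hx : x ∈ A) (hy : y ∈ A) : ¬ x.1 < y.1 := fun hlt =>
    hA hx hy (fun h => hlt.ne (congrArg Sigma.fst h)) (Sigma.Lex.le_def.2 (.inl hlt))
  have hA_subset : A ⊆ Sigma.mk j '' (Sigma.mk j ⁻¹' A) := by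
    rintro ⟨i, w⟩ hw
    obtain rfl : i = j := le_antisymm (not_lt.1 (hnot_lt hv hw)) (not_lt.1 (hnot_lt hw hv))
    exact ⟨w, hw, rfl⟩
  have hfibre : IsAntichain (· ≤ ·) (Sigma.mk j ⁻¹' A) := fun v hv w hw hne hle =>
    hA hv hw (fun h => hne (sigma_mk_injective h)) (.right v w hle)
  exact (mk_le_mk_of_subset hA_subset).trans (mk_image_le.trans (hF j _ hfibre))

lemma isWellMonotone_lexSum [WellFoundedLT J] [∀ j, PartialOrder (F j)] {m : Cardinal.{u}}
    (hUD : ∀ j ⦃v c w⦄, (U j).Edge v c w → c ∈ D) (hU : ∀ j, (U j).IsWellMonotone m) :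
    (lexSum D U).IsWellMonotone m where
  wellFoundedLT := wellFoundedLT_sigmaLex fun j => (hU j).wellFoundedLT
  monotone x y c x' y' hxy hedge hyx' := by
    have hc : c ∈ D := mem_colors_of_lexSum hUD hedge
    rcases hxy with ⟨v, u, hij⟩ | ⟨v, u, hvu⟩ <;> rcases hedge with h | ⟨-, h⟩ <;>
      rcases hyx' with ⟨u', v', hij'⟩ | ⟨u', v', hu'v'⟩
    -- An edge inside a component remains one unless a comparison crosses components;
    -- in all other cases the new edge goes strictly down.
    any_goals first
      | exact .inside ((hU _).monotone hvu h hu'v')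
      | exact .jump ⟨hc, by order⟩
  width _ := mk_le_of_isAntichain_sigmaLex fun j => (hU j).width

lemma isAlmostUniversalOn_lexSum [Fintype C] [WellFoundedLT J] [Nonempty J] {κ : Cardinal.{u}}
    {E : J → Set C} (hW : PrefixIndependent W) (hE : ∀ j, E j ⊆ D)
    (hcover : ∀ γ ∈ W, ↑(infOcc γ) ⊆ D → ∃ j, ↑(infOcc γ) ⊆ E j)
    (hU : ∀ j, (U j).IsUniversalOn κ (E j) W) : (lexSum D U).IsAlmostUniversalOn κ D W where
  mem_colors := mem_colors_of_lexSum fun j _ _ _ h => hE j ((hU j).mem_colors h)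
  sat := sat_lexSum hW fun j => (hU j).sat
  exists_morphism_from VT T hκ hT v₀ := by
    obtain ⟨t, ht, hcolors⟩ := exists_reachable_infOcc_eq_colorsFrom hT.sat v₀
    have hchild : ∃ j, T.colorsFrom t ⊆ E j := by
      rcases hcolors with hempty | ⟨γ, hγ, hinf⟩
      · exact ⟨Classical.arbitrary J, by simp [hempty]⟩
      · exact hinf ▸ hcover γ hγ (hinf ▸ fun c ⟨_, _, _, h⟩ => hT.mem_colors h)
    obtain ⟨j, hj⟩ := hchild
    obtain ⟨φ, hφ⟩ := (hU j).exists_morphism ⟨fun v c w => T.Reachable t v ∧ T.Edge v c w⟩ hκ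
      (hT.of_le (fun _ _ _ h => h.2) fun v _ w h => hj ⟨v, w, h⟩)
    exact ⟨t, ht, fun v => toLex ⟨j, φ v⟩, fun _ _ _ hv h => .inside (hφ ⟨hv, h⟩)⟩

end LexSum

section LexPower

variable {κ : Cardinal.{u}} {D : Set C} {W : Set (ℕ → C)} {U : Pregraph C V}

/-- `B` is the part reachable from a suitable vertex once `X` is removed from `T`. -/
lemma IsAlmostUniversalOn.exists_morphism_after_removal (hU : U.IsAlmostUniversalOn κ D W)
    {VT : Type u} {T : Pregraph C VT} (hκ : #VT < κ) (hT : T.IsHistoryGraph D W) {X : Set VT}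
    (hX : X ≠ Set.univ) :
    ∃ B : Set VT, Disjoint B X ∧ B.Nonempty ∧ ∃ φ : VT → V, ∀ ⦃v c w⦄, v ∈ B → T.Edge v c w →
      w ∉ X → w ∈ B ∧ U.Edge (φ v) c (φ w) := by
  obtain ⟨v₀, hv₀⟩ := (Set.ne_univ_iff_exists_notMem X).1 hX
  let T' : Pregraph C VT := ⟨fun v c w => T.Edge v c w ∧ w ∉ X⟩
  obtain ⟨t, ht, φ, hφ⟩ := hU.exists_morphism_from T' hκ
    (hT.of_le (fun _ _ _ h => h.1) fun _ _ _ h => hT.mem_colors h.1) v₀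
  refine ⟨{v | T'.Reachable t v}, ?_, ⟨t, .refl t⟩, φ, fun v c w hv h hw => ?_⟩
  · exact Set.disjoint_left.2 fun v hv =>
      (ht.trans hv).mem_of_closed (G := T') (S := Xᶜ) (fun _ _ _ _ h => h.2) hv₀
  · exact ⟨hv.tail (G := T') ⟨h, hw⟩, hφ hv ⟨h, hw⟩⟩

lemma IsAlmostUniversalOn.exists_isMorphism_lexSum {ι : Type u} [LinearOrder ι] [WellFoundedLT ι]
    (hU : U.IsAlmostUniversalOn κ D W) {VT : Type u} {T : Pregraph C VT} (hκ : #VT < κ)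
    (hι : #VT < #ι) (hT : T.IsHistoryGraph D W) :
    ∃ φ : VT → Σₗ _ : ι, V, T.IsMorphism (lexSum D fun _ : ι => U) φ := by
  rcases isEmpty_or_nonempty VT with hVT | ⟨⟨v₁⟩⟩
  · exact ⟨isEmptyElim, fun v => isEmptyElim v⟩
  obtain ⟨-, -, φ₁, -⟩ := hU.exists_morphism_from T hκ hT v₁
  have hremove (X : Set VT) : ∃ (B : Set VT) (φ : VT → V), Disjoint B X ∧
      (X ≠ Set.univ → B.Nonempty) ∧ ∀ ⦃v c w⦄, v ∈ B → T.Edge v c w → w ∉ X →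
        w ∈ B ∧ U.Edge (φ v) c (φ w) := by
    by_cases hX : X = Set.univ
    · exact ⟨∅, φ₁, Set.empty_disjoint X, fun h => absurd hX h, fun _ _ _ h => h.elim⟩
    · obtain ⟨B, hBX, hB, φ, hφ⟩ := hU.exists_morphism_after_removal hκ hT hX
      exact ⟨B, φ, hBX, fun _ => hB, hφ⟩
  choose B φ hBX hB hφ using hremove
  obtain ⟨ℓ, hℓ⟩ := exists_layering hι B hBX hB
  refine ⟨fun v => toLex ⟨ℓ v, φ {u | ℓ u < ℓ v} v⟩, fun v c w h => ?_⟩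
  by_cases hlt : ℓ w < ℓ v
  · exact .jump ⟨hT.mem_colors h, hlt⟩
  have hv : v ∈ B {u | ℓ u < ℓ v} := hℓ v ▸ rfl
  obtain ⟨hw, hφw⟩ := hφ _ hv h hlt
  have hlevel : ℓ w = ℓ v := by rwa [← hℓ] at hw
  beta_reduce
  rw [hlevel]
  exact .inside hφw

lemma IsAlmostUniversalOn.isUniversalOn_lexSum {ι : Type u} [LinearOrder ι] [WellFoundedLT ι]
    (hι : κ ≤ #ι) (hW : PrefixIndependent W) (hU : U.IsAlmostUniversalOn κ D W) :
    (lexSum D fun _ : ι => U).IsUniversalOn κ D W where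
  mem_colors := mem_colors_of_lexSum fun _ => hU.mem_colors
  sat := sat_lexSum hW fun _ => hU.sat
  exists_morphism _ _ hκ hT := hU.exists_isMorphism_lexSum hκ (hκ.trans_le hι) hT

end LexPower

/-- Existence of a well-monotone graph of width at most `m` that is universal in the sense of
`IsUniversalOn`. -/
def HasUniversalGraph (κ m : Cardinal.{u}) (D : Set C) (W : Set (ℕ → C)) : Prop :=
  ∃ (V : Type u) (_ : PartialOrder V) (U : Pregraph C V), U.IsWellMonotone m ∧ U.IsUniversalOn κ D W

section HasUniversalGraph

variable {κ : Cardinal.{u}} {D : Set C} {W : Set (ℕ → C)}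

lemma hasUniversalGraph_one (hW : ∀ γ : ℕ → C, (∀ n, γ n ∈ D) → γ ∈ W) :
    HasUniversalGraph κ 1 D W :=
  ⟨PUnit, inferInstance, loops D, isWellMonotone_loops D, isUniversalOn_loops κ hW⟩

lemma HasUniversalGraph.congr {m : Cardinal.{u}} {W' : Set (ℕ → C)}
    (h : HasUniversalGraph κ m D W) (hWW' : ∀ γ : ℕ → C, (∀ n, γ n ∈ D) → (γ ∈ W ↔ γ ∈ W')) :
    HasUniversalGraph κ m D W' :=
  let ⟨V, hV, U, hmono, huniv⟩ := h
  ⟨V, hV, U, hmono, huniv.congr hWW'⟩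

lemma HasUniversalGraph.mono {m m' : Cardinal.{u}} (h : HasUniversalGraph κ m D W)
    (hm : m ≤ m') : HasUniversalGraph κ m' D W :=
  let ⟨V, hV, U, hmono, huniv⟩ := h
  ⟨V, hV, U, hmono.mono hm, huniv⟩

variable {J : Type u} [Nonempty J] [Fintype C] {E : J → Set C}

theorem hasUniversalGraph_sum [Finite J] {m : J → Cardinal.{u}} (hW : PrefixIndependent W)
    (hE : ∀ j, E j ⊆ D) (hcover : ∀ γ ∉ W, ↑(infOcc γ) ⊆ D → ∃ j, ↑(infOcc γ) ⊆ E j)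
    (h : ∀ j, HasUniversalGraph κ (m j) (E j) W) : HasUniversalGraph κ (Cardinal.sum m) D W := by
  classical
  choose F _ U hmono huniv using h
  cases nonempty_fintype J
  obtain ⟨σ, hσ, -⟩ := (Finset.univ : Finset J).exists_cycleOn
  rw [Finset.coe_univ] at hσ
  exact ⟨_, inferInstance, cyclicSum D E σ U, isWellMonotone_jumpSum hmono,
    isUniversalOn_cyclicSum hσ hW hE hcover huniv⟩

theorem hasUniversalGraph_of_forall {m : Cardinal.{u}} (hW : PrefixIndependent W)
    (hE : ∀ j, E j ⊆ D) (hcover : ∀ γ ∈ W, ↑(infOcc γ) ⊆ D → ∃ j, ↑(infOcc γ) ⊆ E j)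
    (h : ∀ j, HasUniversalGraph κ m (E j) W) : HasUniversalGraph κ m D W := by
  choose F _ U hmono huniv using h
  obtain ⟨_, _⟩ := exists_wellFoundedLT (α := J)
  have halmost : (lexSum D U).IsAlmostUniversalOn κ D W :=
    isAlmostUniversalOn_lexSum hW hE hcover huniv
  have hmono' : (lexSum D U).IsWellMonotone m :=
    isWellMonotone_lexSum (fun j _ _ _ h => hE j ((huniv j).mem_colors h)) hmono
  exact ⟨_, inferInstance, lexSum D fun _ : κ.ord.ToType => lexSum D U,
    isWellMonotone_lexSum (fun _ => halmost.mem_colors) fun _ => hmono',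
    halmost.isUniversalOn_lexSum (mk_ord_toType κ).ge hW⟩

end HasUniversalGraph

end Pregraph

section Muller

variable {C : Type u} [Fintype C]

lemma mem_mullerObj_filter_subset [DecidableEq C] {F : Finset (Finset C)} {D : Finset C}
    {γ : ℕ → C} (hγ : ∀ n, γ n ∈ (D : Set C)) :
    γ ∈ MullerObj (F.filter (· ⊆ D)) ↔ γ ∈ MullerObj F := by
  change infOcc γ ∈ F.filter (· ⊆ D) ↔ infOcc γ ∈ F
  rw [Finset.mem_filter, and_iff_left (Finset.coe_subset.1 (coe_infOcc_subset hγ))]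

variable [DecidableEq C]

lemma mem_childSupports_iff_maximal {D E : Finset C} {F : Finset (Finset C)} :
    E ∈ childSupports D F ↔ Maximal (fun E => E ⊆ D ∧ E.Nonempty ∧ (E ∈ F ↔ D ∉ F)) E := by
  by_cases hD : D ∈ F <;>
    simp only [childSupports, hD, if_true, if_false, Finset.mem_filter, Finset.mem_powerset,
      maximal_iff, not_true_eq_false, not_false_eq_true, iff_true, iff_false, and_imp, and_assoc]

lemma exists_infOcc_subset_childSupports {D : Finset C} {F : Finset (Finset C)} {γ : ℕ → C}
    (hγD : ↑(infOcc γ) ⊆ (D : Set C)) (hγ : γ ∈ MullerObj F ↔ D ∉ F) :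
    ∃ E ∈ childSupports D F, infOcc γ ⊆ E := by
  have hmem : infOcc γ ∈ {E : Finset C | E ⊆ D ∧ E.Nonempty ∧ (E ∈ F ↔ D ∉ F)} :=
    ⟨Finset.coe_subset.1 hγD, infOcc_nonempty γ, hγ⟩
  obtain ⟨E, hE, hmax⟩ := (Set.toFinite _).exists_le_maximal hmem
  exact ⟨E, mem_childSupports_iff_maximal.2 hmax, hE⟩

lemma memMuller_of_mem {D : Finset C} {F : Finset (Finset C)} (hne : childSupports D F ≠ ∅)
    (hD : D ∈ F) :
    memMuller D F = ∑ E : childSupports D F, memMuller E.1 (F.filter (· ⊆ E.1)) := by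
  rw [memMuller, if_neg hne, if_pos hD, Finset.univ_eq_attach]

lemma memMuller_le_of_notMem {D E : Finset C} {F : Finset (Finset C)} (hD : D ∉ F)
    (hE : E ∈ childSupports D F) : memMuller E (F.filter (· ⊆ E)) ≤ memMuller D F := by
  rw [memMuller.eq_def D F, if_neg (Finset.ne_empty_of_mem hE), if_neg hD]
  exact Finset.le_sup (f := fun E : childSupports D F => memMuller E.1 (F.filter (· ⊆ E.1)))
    (Finset.mem_attach _ ⟨E, hE⟩)

open Pregraph

variable {κ : Cardinal.{u}} {D : Finset C} {F : Finset (Finset C)}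

lemma hasUniversalGraph_of_childSupports_eq_empty (h : childSupports D F = ∅) :
    HasUniversalGraph κ (memMuller D F) D (MullerObj F) := by
  have hno_child (γ : ℕ → C) (hγD : ↑(infOcc γ) ⊆ (D : Set C)) (hγ : γ ∈ MullerObj F ↔ D ∉ F) :
      False := by
    simpa [h] using exists_infOcc_subset_childSupports hγD hγ
  rw [memMuller, if_pos h, Nat.cast_one]
  by_cases hD : D ∈ F
  · refine hasUniversalGraph_one fun γ hγD => by_contra fun hγ => ?_
    exact hno_child γ (coe_infOcc_subset hγD) (iff_of_false hγ (not_not.2 hD))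
  · refine hasUniversalGraph_of_forall (J := PUnit) (E := fun _ => ∅)
      (prefixIndependent_mullerObj F) (fun _ => Set.empty_subset _) ?_ fun _ => ?_
    · exact fun γ hγ hγD => (hno_child γ hγD (iff_of_true hγ hD)).elim
    · exact hasUniversalGraph_one fun γ hγ => (hγ 0).elim

lemma hasUniversalGraph_of_mem (hne : childSupports D F ≠ ∅) (hD : D ∈ F)
    (h : ∀ E ∈ childSupports D F,
      HasUniversalGraph κ (memMuller E (F.filter (· ⊆ E))) E (MullerObj F)) :
    HasUniversalGraph κ (memMuller D F) D (MullerObj F) := by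
  have : Nonempty (childSupports D F) := (Finset.nonempty_of_ne_empty hne).to_subtype
  rw [memMuller_of_mem hne hD, ← sum_natCast_eq_cast_sum]
  refine hasUniversalGraph_sum (prefixIndependent_mullerObj F)
    (fun E => Finset.coe_subset.2 (childSupports_ssubset E.2).subset) (fun γ hγ hγD => ?_)
    fun E => h E E.2
  obtain ⟨E, hE, hγE⟩ :=
    exists_infOcc_subset_childSupports hγD (iff_of_false hγ (not_not.2 hD))
  exact ⟨⟨E, hE⟩, Finset.coe_subset.2 hγE⟩

lemma hasUniversalGraph_of_notMem (hne : childSupports D F ≠ ∅) (hD : D ∉ F)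
    (h : ∀ E ∈ childSupports D F,
      HasUniversalGraph κ (memMuller E (F.filter (· ⊆ E))) E (MullerObj F)) :
    HasUniversalGraph κ (memMuller D F) D (MullerObj F) := by
  have : Nonempty (childSupports D F) := (Finset.nonempty_of_ne_empty hne).to_subtype
  refine hasUniversalGraph_of_forall (J := childSupports D F) (prefixIndependent_mullerObj F)
    (fun E => Finset.coe_subset.2 (childSupports_ssubset E.2).subset) (fun γ hγ hγD => ?_)
    fun E => (h E E.2).mono (Nat.cast_le.2 (memMuller_le_of_notMem hD E.2))
  obtain ⟨E, hE, hγE⟩ := exists_infOcc_subset_childSupports hγD (iff_of_true hγ hD)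
  exact ⟨⟨E, hE⟩, Finset.coe_subset.2 hγE⟩

theorem hasUniversalGraph_mullerObj (κ : Cardinal.{u}) (D : Finset C) (F : Finset (Finset C)) :
    HasUniversalGraph κ (memMuller D F) D (MullerObj F) := by
  induction D using Finset.strongInduction generalizing F with
  | _ D ih =>
    have hchild (E) (hE : E ∈ childSupports D F) :
        HasUniversalGraph κ (memMuller E (F.filter (· ⊆ E))) E (MullerObj F) :=
      (ih E (childSupports_ssubset hE) (F.filter (· ⊆ E))).congr fun _ =>
        mem_mullerObj_filter_subset
    by_cases hempty : childSupports D F = ∅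
    · exact hasUniversalGraph_of_childSupports_eq_empty hempty
    · by_cases hD : D ∈ F
      · exact hasUniversalGraph_of_mem hempty hD hchild
      · exact hasUniversalGraph_of_notMem hempty hD hchild

end Muller

/-- For every Muller objective `F` over a finite set of colours and
every cardinal `κ`, there is a well-monotone graph of width ≤ `mem(F)` which is
`(κ, Muller(F))`-universal for prefix-independent objectives. -/
theorem muller_universal_graph
    {C : Type u} [Fintype C] [DecidableEq C]
    (F : Finset (Finset C)) (hF : ∀ A ∈ F, A.Nonempty) (κ : Cardinal.{u}) :
    ∃ (VU : Type u) (le : VU → VU → Prop) (U : Pregraph C VU),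
      IsPartialOrder VU le ∧ WellFounded (strictOf le) ∧ U.MonotoneRel le ∧
      (∀ A : Set VU, IsAntichain le A →
        #(↥A) ≤ (memMuller Finset.univ F : Cardinal.{u})) ∧
      IsUniversalPI κ (MullerObj F) U := by
  obtain ⟨V, _, U, hmono, huniv⟩ := hasUniversalGraph_mullerObj κ Finset.univ F
  refine ⟨V, (· ≤ ·), U, inferInstance, hmono.wellFounded_strictOf, hmono.monotone, hmono.width,
    huniv.sat, fun VT T t₀ ht hκ hT => huniv.exists_morphism T hκ ?_⟩
  exact ⟨ht.exists_history, fun _ c _ _ => Finset.mem_coe.2 (Finset.mem_univ c), hT⟩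
end
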